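/- arXiv:1710.07429 — 3 statements merged into one kernel-verified Lean document; each statement's English description precedes it below -/
import Mathlib

section
/- There exists a universal constant c > 0 such that for any halfspace f = 1{∑ a_i x_i > t} on {-1,1}^n with ∑ a_i² = 1 and E[f] ≤ 1/2, the degree-1 Fourier weight satisfies W¹(f) ≥ c·E[f]²·log(1/E[f]). -/
open Finset

noncomputable section
open scoped Classical

/-- The ±1 value associated to a Boolean bit. -/
def sgn1 (b : Bool) : ℝ := if b then 1 else -1

/-- Probability of an event under the uniform measure on `{-1,1}^n`. -/
def cubePr (n : ℕ) (P : (Fin n → Bool) → Prop) : ℝ :=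
  ((univ.filter P).card : ℝ) / 2 ^ n

/-- Expectation of a function under the uniform measure on `{-1,1}^n`. -/
def cubeE (n : ℕ) (f : (Fin n → Bool) → ℝ) : ℝ := (∑ x, f x) / 2 ^ n

/-- The linear form `a · x = ∑ aᵢ xᵢ` on `{-1,1}^n`. -/
def lin (n : ℕ) (a : Fin n → ℝ) (x : Fin n → Bool) : ℝ := ∑ i, a i * sgn1 (x i)

/-- The halfspace `1{a · x > t}` as a 0/1-valued function. -/
def halfspace (n : ℕ) (a : Fin n → ℝ) (t : ℝ) (x : Fin n → Bool) : ℝ :=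
  if t < lin n a x then 1 else 0

/-- The influence of coordinate `i` on `f`: the probability that flipping
coordinate `i` changes the value of `f`. -/
def infl (n : ℕ) (i : Fin n) (f : (Fin n → Bool) → ℝ) : ℝ :=
  cubePr n (fun x => f x ≠ f (Function.update x i (!x i)))

/-- The degree-1 Fourier coefficient `f̂({i}) = E[f(x)·xᵢ]`. -/
def fCoeff (n : ℕ) (f : (Fin n → Bool) → ℝ) (i : Fin n) : ℝ :=
  cubeE n (fun x => f x * sgn1 (x i))

/-- The degree-1 Fourier weight `W¹(f) = ∑ᵢ f̂({i})²`. -/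
def W1 (n : ℕ) (f : (Fin n → Bool) → ℝ) : ℝ := ∑ i, (fCoeff n f i) ^ 2



/-- Product weight on the cube with bias vector `v`. -/
def wt (n : ℕ) (v : Fin n → ℝ) (x : Fin n → Bool) : ℝ := ∏ i, ((1 + v i * sgn1 (x i)) / 2)

/-- Centered linear form. -/
def Zf (n : ℕ) (a v : Fin n → ℝ) (x : Fin n → Bool) : ℝ := ∑ i, a i * (sgn1 (x i) - v i)

lemma sum_cube_succ (n : ℕ) (g : (Fin (n + 1) → Bool) → ℝ) :
    ∑ x, g x = ∑ y : Fin n → Bool, g (Fin.cons true y) + ∑ y : Fin n → Bool, g (Fin.cons false y) := by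
  rw [← (Fin.consEquiv (fun _ : Fin (n + 1) => Bool)).sum_comp, Fintype.sum_prod_type]
  simp [Fin.consEquiv]

lemma wt_cons (n : ℕ) (v : Fin (n + 1) → ℝ) (b : Bool) (y : Fin n → Bool) :
    wt (n + 1) v (Fin.cons b y) = (1 + v 0 * sgn1 b) / 2 * wt n (fun i => v i.succ) y := by
  simp only [wt, Fin.prod_univ_succ, Fin.cons_zero, Fin.cons_succ]

lemma Zf_cons (n : ℕ) (a v : Fin (n + 1) → ℝ) (b : Bool) (y : Fin n → Bool) :
    Zf (n + 1) a v (Fin.cons b y) =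
      a 0 * (sgn1 b - v 0) + Zf n (fun i => a i.succ) (fun i => v i.succ) y := by
  simp [Zf, Fin.sum_univ_succ]

lemma sgn1_true : sgn1 true = 1 := by simp [sgn1]
lemma sgn1_false : sgn1 false = -1 := by simp [sgn1]

lemma moments (n : ℕ) : ∀ (a v : Fin n → ℝ), (∀ i, v i ^ 2 ≤ 1 / 4 ∨ v i ^ 2 = 1) →
    (∑ x, wt n v x = 1) ∧ (∑ x, wt n v x * Zf n a v x = 0) ∧
    (∑ x, wt n v x * Zf n a v x ^ 2 = ∑ i, a i ^ 2 * (1 - v i ^ 2)) ∧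
    (∑ x, wt n v x * Zf n a v x ^ 4 ≤ 3 * (∑ i, a i ^ 2 * (1 - v i ^ 2)) ^ 2) := by
  induction n with
  | zero => intro a v _; simp [wt, Zf]
  | succ n ih =>
    intro a v hv
    obtain ⟨h0, h1, h2, h4⟩ := ih (fun i => a i.succ) (fun i => v i.succ) (fun i => hv i.succ)
    have e1 : ∀ c d : ℝ, ∑ y, d * wt n (fun i => v i.succ) y *
        (c + Zf n (fun i => a i.succ) (fun i => v i.succ) y) = d * c := by
      intro c d
      calc _ = d * c * ∑ y, wt n (fun i => v i.succ) y + d * ∑ y, wt n (fun i => v i.succ) y *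
            Zf n (fun i => a i.succ) (fun i => v i.succ) y := by
              rw [mul_sum, mul_sum, ← sum_add_distrib]
              exact sum_congr rfl fun _ _ => by ring
        _ = _ := by rw [h0, h1]; ring
    have e2 : ∀ c d : ℝ, ∑ y, d * wt n (fun i => v i.succ) y *
        (c + Zf n (fun i => a i.succ) (fun i => v i.succ) y) ^ 2 =
        d * (c ^ 2 + ∑ i : Fin n, a i.succ ^ 2 * (1 - v i.succ ^ 2)) := by
      intro c d
      calc _ = d * c ^ 2 * ∑ y, wt n (fun i => v i.succ) y +
            2 * d * c * ∑ y, wt n (fun i => v i.succ) y *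
              Zf n (fun i => a i.succ) (fun i => v i.succ) y +
            d * ∑ y, wt n (fun i => v i.succ) y *
              Zf n (fun i => a i.succ) (fun i => v i.succ) y ^ 2 := by
              rw [mul_sum, mul_sum, mul_sum, ← sum_add_distrib, ← sum_add_distrib]
              exact sum_congr rfl fun _ _ => by ring
        _ = _ := by rw [h0, h1, h2]; ring
    have e4 : ∀ c d : ℝ, ∑ y, d * wt n (fun i => v i.succ) y *
        (c + Zf n (fun i => a i.succ) (fun i => v i.succ) y) ^ 4 =
        d * (c ^ 4 + 6 * c ^ 2 * (∑ i : Fin n, a i.succ ^ 2 * (1 - v i.succ ^ 2)) +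
          4 * c * (∑ y, wt n (fun i => v i.succ) y *
              Zf n (fun i => a i.succ) (fun i => v i.succ) y ^ 3) +
          (∑ y, wt n (fun i => v i.succ) y *
              Zf n (fun i => a i.succ) (fun i => v i.succ) y ^ 4)) := by
      intro c d
      calc _ = d * c ^ 4 * ∑ y, wt n (fun i => v i.succ) y +
            4 * d * c ^ 3 * ∑ y, wt n (fun i => v i.succ) y *
              Zf n (fun i => a i.succ) (fun i => v i.succ) y +
            6 * d * c ^ 2 * ∑ y, wt n (fun i => v i.succ) y *
              Zf n (fun i => a i.succ) (fun i => v i.succ) y ^ 2 +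
            4 * d * c * ∑ y, wt n (fun i => v i.succ) y *
              Zf n (fun i => a i.succ) (fun i => v i.succ) y ^ 3 +
            d * ∑ y, wt n (fun i => v i.succ) y *
              Zf n (fun i => a i.succ) (fun i => v i.succ) y ^ 4 := by
              rw [mul_sum, mul_sum, mul_sum, mul_sum, mul_sum, ← sum_add_distrib,
                ← sum_add_distrib, ← sum_add_distrib, ← sum_add_distrib]
              exact sum_congr rfl fun _ _ => by ring
        _ = _ := by rw [h0, h1, h2]; ring
    simp only [sum_cube_succ, wt_cons, Zf_cons, e1, e2, e4, sgn1_true, sgn1_false,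
      Fin.sum_univ_succ (n := n)]
    refine ⟨?_, ?_, ?_, ?_⟩
    · rw [← mul_sum, ← mul_sum, h0]; ring
    · ring
    · ring
    · set V := ∑ i : Fin n, a i.succ ^ 2 * (1 - v i.succ ^ 2)
      set M3 := ∑ y, wt n (fun i => v i.succ) y *
              Zf n (fun i => a i.succ) (fun i => v i.succ) y ^ 3
      set M4 := ∑ y, wt n (fun i => v i.succ) y *
              Zf n (fun i => a i.succ) (fun i => v i.succ) y ^ 4
      have key : (1 - v 0 ^ 2) * (1 + 3 * v 0 ^ 2) ≤ 3 * (1 - v 0 ^ 2) ^ 2 := by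
        rcases hv 0 with h | h
        · nlinarith [sq_nonneg (v 0)]
        · rw [h]; norm_num
      have key2 := mul_le_mul_of_nonneg_left key (show 0 ≤ a 0 ^ 4 by positivity)
      nlinarith [h4, key2]

lemma poly_abs (y : ℝ) : 3 / 4 * y ^ 2 - y ^ 4 / 12 ≤ |y| := by
  have h : y ^ 2 = |y| ^ 2 := (sq_abs y).symm
  have h4 : y ^ 4 = |y| ^ 4 := by rw [show y ^ 4 = (y ^ 2) ^ 2 by ring, h]; ring
  rw [h, h4]
  have h0 := abs_nonneg y
  generalize |y| = z at *
  have : 0 ≤ 1 - 3 / 4 * z + z ^ 3 / 12 := by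
    nlinarith [mul_nonneg h0 (sq_nonneg (z - 7 / 4)), sq_nonneg (z - 7 / 4)]
  nlinarith [mul_nonneg h0 this]

lemma poly_ind (y : ℝ) : (y + 3 / 4 * y ^ 2 - y ^ 4 / 12) / 4 ≤ if 0 ≤ y then 1 else 0 := by
  split_ifs with h
  · nlinarith [sq_nonneg (y ^ 2 - (12 / 5) ^ 2), sq_nonneg (y - 12 / 5)]
  · have := poly_abs y
    rw [abs_of_neg (not_le.mp h)] at this
    linarith

lemma wt_sq (n : ℕ) : ∀ (v : Fin n → ℝ), ∑ x, wt n v x ^ 2 = ∏ i, ((1 + v i ^ 2) / 2) := by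
  induction n with
  | zero => intro v; simp [wt]
  | succ n ih =>
    intro v
    rw [sum_cube_succ, Fin.prod_univ_succ, ← ih]
    simp only [wt_cons, mul_pow, ← mul_sum, sgn1_true, sgn1_false]
    ring

lemma wt_nonneg (n : ℕ) (v : Fin n → ℝ) (hv : ∀ i, v i ^ 2 ≤ 1 / 4 ∨ v i ^ 2 = 1)
    (x : Fin n → Bool) : 0 ≤ wt n v x := by
  apply prod_nonneg
  intro i _
  have h1 : v i ^ 2 ≤ 1 := by rcases hv i with h | h <;> linarith
  have h2 := abs_le.mp ((sq_le_one_iff_abs_le_one _).mp h1)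
  cases x i <;> simp only [sgn1_true, sgn1_false] <;> linarith

lemma prob_nonneg (n : ℕ) (a v : Fin n → ℝ) (hv : ∀ i, v i ^ 2 ≤ 1 / 4 ∨ v i ^ 2 = 1) :
    1 / 8 ≤ ∑ x, wt n v x * (if 0 ≤ Zf n a v x then 1 else 0) := by
  obtain ⟨h0, h1, h2, h4⟩ := moments n a v hv
  set V := ∑ i, a i ^ 2 * (1 - v i ^ 2) with hV
  have hVn : 0 ≤ V := by
    rw [← h2]; exact sum_nonneg fun x _ => mul_nonneg (wt_nonneg n v hv x) (sq_nonneg _)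
  rcases hVn.eq_or_lt with hz | hp
  · have hall : ∀ x, wt n v x * Zf n a v x ^ 2 = 0 := by
      have := (sum_eq_zero_iff_of_nonneg (s := univ) (f := fun x => wt n v x * Zf n a v x ^ 2)
        fun x _ => mul_nonneg (wt_nonneg n v hv x) (sq_nonneg _)).mp (by rw [h2, ← hz])
      exact fun x => this x (mem_univ x)
    have : ∑ x, wt n v x * (if 0 ≤ Zf n a v x then (1 : ℝ) else 0) = ∑ x, wt n v x := by
      refine sum_congr rfl fun x _ => ?_
      rcases mul_eq_zero.mp (hall x) with h | h
      · rw [h]; ring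
      · have : Zf n a v x = 0 := by simpa using h
        rw [this]; simp
    rw [this, h0]; norm_num
  · have hs : 0 < Real.sqrt V := Real.sqrt_pos.mpr hp
    set s := Real.sqrt V with hsdef
    have hs2 : s ^ 2 = V := Real.sq_sqrt hVn
    have hle : ∑ x, wt n v x * ((Zf n a v x / s + 3 / 4 * (Zf n a v x / s) ^ 2
        - (Zf n a v x / s) ^ 4 / 12) / 4) ≤
        ∑ x, wt n v x * (if 0 ≤ Zf n a v x then (1 : ℝ) else 0) := by
      refine sum_le_sum fun x _ => mul_le_mul_of_nonneg_left ?_ (wt_nonneg n v hv x)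
      have := poly_ind (Zf n a v x / s)
      have e : (0 ≤ Zf n a v x / s) ↔ 0 ≤ Zf n a v x := by
        rw [le_div_iff₀ hs, zero_mul]
      simpa only [e] using this
    refine le_trans ?_ hle
    have : ∑ x, wt n v x * ((Zf n a v x / s + 3 / 4 * (Zf n a v x / s) ^ 2
        - (Zf n a v x / s) ^ 4 / 12) / 4) =
        1 / (4 * s) * ∑ x, wt n v x * Zf n a v x + 3 / (16 * s ^ 2) * ∑ x, wt n v x * Zf n a v x ^ 2
        - 1 / (48 * s ^ 4) * ∑ x, wt n v x * Zf n a v x ^ 4 := by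
      rw [mul_sum, mul_sum, mul_sum, ← sum_add_distrib, ← sum_sub_distrib]
      refine sum_congr rfl fun x _ => ?_
      field_simp
      ring
    rw [this, h1, h2]
    have h5 : 1 / (48 * s ^ 4) * ∑ x, wt n v x * Zf n a v x ^ 4 ≤ 1 / (48 * s ^ 4) * (3 * V ^ 2) :=
      mul_le_mul_of_nonneg_left h4 (by positivity)
    have h6 : 1 / (48 * s ^ 4) * (3 * V ^ 2) = 1 / 16 := by
      rw [← hs2]; field_simp; norm_num
    have h7 : 3 / (16 * s ^ 2) * V = 3 / 16 := by
      rw [← hs2]; field_simp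
    linarith

lemma cubeE_halfspace_mul (n : ℕ) (a : Fin n → ℝ) (f : (Fin n → Bool) → ℝ) :
    ∑ i, a i * fCoeff n f i = cubeE n (fun x => f x * lin n a x) := by
  simp only [fCoeff, cubeE, lin, mul_sum, sum_div]
  rw [sum_comm]
  simp only [mul_div_assoc', mul_sum]
  refine sum_congr rfl fun x _ => sum_congr rfl fun i _ => by ring

lemma lin_not (n : ℕ) (a : Fin n → ℝ) (x : Fin n → Bool) :
    lin n a (fun i => !x i) = - lin n a x := by
  simp only [lin, ← sum_neg_distrib]
  refine sum_congr rfl fun i _ => ?_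
  cases x i <;> simp [sgn1]

lemma abs_lin (n : ℕ) (a : Fin n → ℝ) (t : ℝ) (ha : ∑ i, a i ^ 2 = 1) :
    1 / 2 * 2 ^ n ≤ ∑ x, |lin n a x - t| ∧ ∑ x, lin n a x = 0 := by
  obtain ⟨h0, h1, h2, h4⟩ := moments n a (fun _ => 0) (fun i => by norm_num)
  have hw : ∀ x, wt n (fun _ => 0) x = 1 / 2 ^ n := by intro x; simp [wt]
  have hZ : ∀ x, Zf n a (fun _ => 0) x = lin n a x := by intro x; simp [Zf, lin]
  simp only [hw, hZ, ← mul_sum] at h1 h2 h4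
  have hN : (0 : ℝ) < 2 ^ n := by positivity
  have g1 : ∑ x, lin n a x = 0 := by
    rcases mul_eq_zero.mp h1 with h | h
    · exact absurd h (by positivity)
    · exact h
  refine ⟨?_, g1⟩
  simp at h2 h4
  rw [ha] at h2 h4
  have g2 : ∑ x, lin n a x ^ 2 = 2 ^ n := by field_simp at h2; exact h2
  have g4 : ∑ x, lin n a x ^ 4 ≤ 3 * 2 ^ n := by
    rw [inv_mul_le_iff₀ hN] at h4; linarith
  have hflip : ∑ x, |lin n a x - t| = ∑ x, |lin n a x + t| := by
    rw [← (Equiv.piCongrRight fun _ : Fin n => Equiv.boolNot).sum_comp]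
    refine sum_congr rfl fun x _ => ?_
    have : (Equiv.piCongrRight fun _ : Fin n => Equiv.boolNot) x = fun i => !x i := rfl
    rw [this, lin_not, ← abs_neg]; congr 1; ring
  have hA : ∑ x, (3 / 4 * lin n a x ^ 2 - lin n a x ^ 4 / 12) ≤
      ∑ x, (1 / 2 * (|lin n a x - t| + |lin n a x + t|)) := by
    refine sum_le_sum fun x _ => (poly_abs _).trans ?_
    have := abs_add_le (lin n a x - t) (lin n a x + t)
    rw [show lin n a x - t + (lin n a x + t) = 2 * lin n a x by ring, abs_mul, abs_two] at this
    linarith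
  rw [sum_sub_distrib, ← mul_sum, ← sum_div, ← mul_sum, sum_add_distrib, ← hflip, g2] at hA
  linarith

theorem W1_halfspace_lower_bound :
    ∃ c : ℝ, 0 < c ∧ ∀ (n : ℕ) (a : Fin n → ℝ) (t : ℝ),
      (∑ i, (a i) ^ 2) = 1 →
      0 < cubeE n (halfspace n a t) → cubeE n (halfspace n a t) ≤ 1 / 2 →
      c * (cubeE n (halfspace n a t)) ^ 2 * Real.log (1 / cubeE n (halfspace n a t)) ≤
        W1 n (halfspace n a t) := by
  refine ⟨1 / 24, by norm_num, ?_⟩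
  intro n a t ha hp0 hp1
  set f := halfspace n a t with hf
  set p := cubeE n f with hp
  have hN : (0 : ℝ) < 2 ^ n := by positivity
  have hsum : ∑ x, f x = p * 2 ^ n := by rw [hp, cubeE]; field_simp
  have hf01 : ∀ x, (t < lin n a x ∧ f x = 1) ∨ (lin n a x ≤ t ∧ f x = 0) := by
    intro x
    by_cases h : t < lin n a x
    · left; exact ⟨h, by simp [hf, halfspace, h]⟩
    · right; exact ⟨not_lt.mp h, by simp [hf, halfspace, h]⟩
  have hcoef := cubeE_halfspace_mul n a f
  set L := cubeE n (fun x => f x * lin n a x) with hL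
  have hLsum : ∑ x, f x * lin n a x = L * 2 ^ n := by rw [hL, cubeE]; field_simp
  obtain ⟨habs, hlin0⟩ := abs_lin n a t ha
  -- first bound
  have hL1 : p / 2 ≤ L := by
    have h1 : ∑ x, p * |lin n a x - t| ≤ ∑ x, (f x - p) * (lin n a x - t) := by
      refine sum_le_sum fun x _ => ?_
      rcases hf01 x with ⟨h, e⟩ | ⟨h, e⟩
      · rw [e, abs_of_pos (by linarith)]
        exact mul_le_mul_of_nonneg_right (by linarith) (by linarith)
      · rw [e, abs_of_nonpos (by linarith)]
        linarith
    have h2 : ∑ x, (f x - p) * (lin n a x - t) = L * 2 ^ n := by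
      have : ∀ x, (f x - p) * (lin n a x - t) =
        f x * lin n a x - p * lin n a x - t * f x + p * t := fun x => by ring
      simp only [this, sum_add_distrib, sum_sub_distrib, ← mul_sum, hlin0, hsum, hLsum]
      simp
      ring
    rw [h2, ← mul_sum] at h1
    have h3 := mul_le_mul_of_nonneg_left habs hp0.le
    have h4 : p / 2 * 2 ^ n ≤ L * 2 ^ n := by linarith
    exact le_of_mul_le_mul_right h4 hN
  have hW : L ^ 2 ≤ W1 n f := by
    have := sum_mul_sq_le_sq_mul_sq univ a (fCoeff n f)
    rw [hcoef, ha, one_mul] at this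
    exact this
  -- normalized vector
  set m : Fin n → ℝ := fun i => fCoeff n f i / p with hm
  have hWm : W1 n f = p ^ 2 * ∑ i, m i ^ 2 := by
    rw [W1, mul_sum]
    refine sum_congr rfl fun i _ => ?_
    simp only [hm]; field_simp
  have hm4 : 1 / 4 ≤ ∑ i, m i ^ 2 := by
    have h1 : (p / 2) ^ 2 ≤ p ^ 2 * ∑ i, m i ^ 2 := by
      rw [← hWm]; exact (pow_le_pow_left₀ (by linarith) hL1 2).trans hW
    have h2 : p ^ 2 * (1 / 4) ≤ p ^ 2 * ∑ i, m i ^ 2 := by linarith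
    exact le_of_mul_le_mul_left h2 (by positivity)
  have hm1 : ∀ i, |m i| ≤ 1 := by
    intro i
    simp only [hm]
    rw [abs_div, abs_of_pos hp0, div_le_one hp0, fCoeff, cubeE, abs_div, abs_of_pos hN,
      div_le_iff₀ hN, ← hsum]
    refine (abs_sum_le_sum_abs _ _).trans (sum_le_sum fun x _ => ?_)
    rcases hf01 x with ⟨h, e⟩ | ⟨h, e⟩ <;> rw [e] <;> cases x i <;> simp [sgn1]
  have hLt : t * p < L := by
    have h1 : 0 < ∑ x, f x * (lin n a x - t) := by
      have hne : ∃ x, f x ≠ 0 := by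
        by_contra! h
        have : ∑ x, f x = 0 := sum_eq_zero fun x _ => h x
        rw [hsum] at this
        have := mul_pos hp0 hN
        linarith
      obtain ⟨x0, hx0⟩ := hne
      refine sum_pos' (fun x _ => ?_) ⟨x0, mem_univ _, ?_⟩
      · rcases hf01 x with ⟨h, e⟩ | ⟨h, e⟩ <;> rw [e] <;> linarith
      · rcases hf01 x0 with ⟨h, e⟩ | ⟨h, e⟩
        · rw [e]; linarith
        · exact absurd e hx0
    simp only [mul_sub, sum_sub_distrib, ← sum_mul, hsum, hLsum] at h1
    have h2 : (t * p) * 2 ^ n < L * 2 ^ n := by linarith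
    exact lt_of_mul_lt_mul_right h2 hN.le
  have ham : t < ∑ i, a i * m i := by
    have : ∑ i, a i * m i = L / p := by
      rw [← hcoef, sum_div]
      refine sum_congr rfl fun i _ => ?_
      simp only [hm]; ring
    rw [this, lt_div_iff₀ hp0]; exact hLt
  -- the tilted measure
  set v : Fin n → ℝ := fun i => if |m i| ≤ 1 / 2 then m i else if 0 ≤ a i then 1 else -1 with hv
  have hv1 : ∀ i, v i ^ 2 ≤ 1 / 4 ∨ v i ^ 2 = 1 := by
    intro i
    simp only [hv]
    split_ifs with h1 h2
    · left; rw [← sq_abs]; nlinarith [abs_nonneg (m i)]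
    · right; norm_num
    · right; norm_num
  have hav : ∑ i, a i * m i ≤ ∑ i, a i * v i := by
    refine sum_le_sum fun i _ => ?_
    have := abs_le.mp (hm1 i)
    simp only [hv]
    split_ifs with h1 h2
    · exact le_rfl
    · nlinarith
    · nlinarith
  have hve : ∀ i, 1 + v i ^ 2 ≤ Real.exp (4 * m i ^ 2) := by
    intro i
    have h0 := Real.add_one_le_exp (4 * m i ^ 2)
    refine le_trans ?_ h0
    simp only [hv]
    split_ifs with h1 h2
    · nlinarith [sq_nonneg (m i)]
    · rw [← sq_abs (m i)]; nlinarith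
    · rw [← sq_abs (m i)]; nlinarith
  have hprob := prob_nonneg n a v hv1
  have hA : ∑ x, wt n v x * (if 0 ≤ Zf n a v x then (1 : ℝ) else 0) ≤ ∑ x, wt n v x * f x := by
    refine sum_le_sum fun x _ => mul_le_mul_of_nonneg_left ?_ (wt_nonneg n v hv1 x)
    have hZ : Zf n a v x = lin n a x - ∑ i, a i * v i := by
      simp only [Zf, lin, mul_sub, sum_sub_distrib]
    rcases hf01 x with ⟨h, e⟩ | ⟨h, e⟩
    · rw [e]; split_ifs <;> norm_num
    · rw [e, if_neg]; rw [hZ]; linarith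
  have hCS := sum_mul_sq_le_sq_mul_sq univ (wt n v) f
  have hff : ∑ x, f x ^ 2 = p * 2 ^ n := by
    rw [← hsum]
    refine sum_congr rfl fun x _ => ?_
    rcases hf01 x with ⟨h, e⟩ | ⟨h, e⟩ <;> rw [e] <;> norm_num
  have hprod : (∏ i, ((1 + v i ^ 2) / 2)) * 2 ^ n ≤ Real.exp (4 * ∑ i, m i ^ 2) := by
    rw [prod_div_distrib]
    simp only [prod_const, card_univ, Fintype.card_fin]
    rw [div_mul_cancel₀ _ hN.ne', mul_sum, Real.exp_sum]
    exact prod_le_prod (fun i _ => by positivity) (fun i _ => hve i)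
  rw [wt_sq, hff] at hCS
  have h64 : 1 / 64 ≤ p * Real.exp (4 * ∑ i, m i ^ 2) := by
    have h1 : (1 / 8 : ℝ) ^ 2 ≤ (∑ x, wt n v x * f x) ^ 2 :=
      pow_le_pow_left₀ (by norm_num) (hprob.trans hA) 2
    have h2 := mul_le_mul_of_nonneg_left hprod hp0.le
    linarith
  have hlog : Real.log (1 / p) ≤ 24 * ∑ i, m i ^ 2 := by
    have h1 : 1 / p ≤ 64 * Real.exp (4 * ∑ i, m i ^ 2) := by
      rw [div_le_iff₀ hp0]; linarith
    have h2 := Real.log_le_log (by positivity) h1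
    rw [Real.log_mul (by norm_num) (Real.exp_ne_zero _), Real.log_exp,
      show (64 : ℝ) = 2 ^ 6 by norm_num, Real.log_pow] at h2
    have := Real.log_two_lt_d9
    push_cast at h2
    linarith
  rw [hWm]
  have := mul_le_mul_of_nonneg_left hlog (show 0 ≤ 1 / 24 * p ^ 2 by positivity)
  linarith

end
end

section
/- There exist universal constants c₁, c₂ > 0 such that for any halfspace f = 1{∑ a_i x_i > t} with ∑ a_i² = 1, a_1 ≥ ... ≥ a_n ≥ 0, and E[f] ≤ 1/2, the maximal influence satisfies c₁·E[f]·min(1, a_1·√(log(1/E[f]))) ≤ max_i I_i(f) ≤ c₂·E[f]·min(1, a_1·√(log(1/E[f]))). -/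
open Finset

noncomputable section
open scoped Classical

/-- Flip of one coordinate. -/
def fl {n : ℕ} (i : Fin n) (x : Fin n → Bool) : Fin n → Bool := Function.update x i (!x i)

/-- Flip of all coordinates. -/
def ng {n : ℕ} (x : Fin n → Bool) : Fin n → Bool := fun i => !x i

lemma fl_fl {n : ℕ} (i : Fin n) (x : Fin n → Bool) : fl i (fl i x) = x := by
  funext j
  by_cases h : j = i
  · subst h; simp [fl]
  · simp [fl, h]

lemma ng_ng {n : ℕ} (x : Fin n → Bool) : ng (ng x) = x := by
  funext j; simp [ng]

lemma sgn1_not (b : Bool) : sgn1 (!b) = - sgn1 b := by cases b <;> simp [sgn1]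

lemma sgn1_cases (b : Bool) : sgn1 b = 1 ∨ sgn1 b = -1 := by cases b <;> simp [sgn1]

lemma lin_ng {n : ℕ} (a : Fin n → ℝ) (x : Fin n → Bool) : lin n a (ng x) = - lin n a x := by
  simp [lin, ng, sgn1_not, Finset.sum_neg_distrib]

lemma lin_fl {n : ℕ} (a : Fin n → ℝ) (i : Fin n) (x : Fin n → Bool) :
    lin n a (fl i x) = lin n a x - 2 * a i * sgn1 (x i) := by
  unfold lin
  rw [← Finset.add_sum_erase univ _ (mem_univ i), ← Finset.add_sum_erase univ (fun j => a j * sgn1 (x j)) (mem_univ i)]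
  have : ∑ j ∈ univ.erase i, a j * sgn1 (fl i x j) = ∑ j ∈ univ.erase i, a j * sgn1 (x j) := by
    apply Finset.sum_congr rfl
    intro j hj
    have : j ≠ i := Finset.ne_of_mem_erase hj
    simp [fl, this]
  rw [this]
  simp [fl, sgn1_not]
  ring

lemma E_mono {n : ℕ} {f g : (Fin n → Bool) → ℝ} (h : ∀ x, f x ≤ g x) : cubeE n f ≤ cubeE n g := by
  unfold cubeE
  gcongr with x
  exact h x

lemma E_add {n : ℕ} (f g : (Fin n → Bool) → ℝ) :
    cubeE n (fun x => f x + g x) = cubeE n f + cubeE n g := by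
  simp [cubeE, Finset.sum_add_distrib, add_div]

lemma E_smul {n : ℕ} (c : ℝ) (f : (Fin n → Bool) → ℝ) :
    cubeE n (fun x => c * f x) = c * cubeE n f := by
  simp [cubeE, ← Finset.mul_sum, mul_div_assoc]

lemma E_const {n : ℕ} (c : ℝ) : cubeE n (fun _ => c) = c := by
  simp [cubeE]

lemma E_sum {n : ℕ} {ι : Type*} (s : Finset ι) (f : ι → (Fin n → Bool) → ℝ) :
    cubeE n (fun x => ∑ i ∈ s, f i x) = ∑ i ∈ s, cubeE n (f i) := by
  simp only [cubeE]
  rw [Finset.sum_comm, Finset.sum_div]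

lemma E_nonneg {n : ℕ} {f : (Fin n → Bool) → ℝ} (h : ∀ x, 0 ≤ f x) : 0 ≤ cubeE n f := by
  have := E_mono (n := n) (f := fun _ => 0) h
  rwa [E_const] at this

lemma E_fl {n : ℕ} (i : Fin n) (f : (Fin n → Bool) → ℝ) :
    cubeE n (fun x => f (fl i x)) = cubeE n f := by
  unfold cubeE
  congr 1
  exact Equiv.sum_comp (⟨fl i, fl i, fl_fl i, fl_fl i⟩ : (Fin n → Bool) ≃ (Fin n → Bool)) f

lemma E_ng {n : ℕ} (f : (Fin n → Bool) → ℝ) :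
    cubeE n (fun x => f (ng x)) = cubeE n f := by
  unfold cubeE
  congr 1
  exact Equiv.sum_comp (⟨ng, ng, ng_ng, ng_ng⟩ : (Fin n → Bool) ≃ (Fin n → Bool)) f

lemma Pr_eq {n : ℕ} (P : (Fin n → Bool) → Prop) :
    cubePr n P = cubeE n (fun x => if P x then 1 else 0) := by
  simp [cubePr, cubeE]

lemma E_exp {n : ℕ} (b : Fin n → ℝ) :
    cubeE n (fun x => Real.exp (lin n b x)) = ∏ i, Real.cosh (b i) := by
  have h : ∏ i, (2 * Real.cosh (b i)) = ∑ x : Fin n → Bool, Real.exp (lin n b x) := by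
    have h1 : ∀ i, 2 * Real.cosh (b i) = ∑ c ∈ (univ : Finset Bool), Real.exp (b i * sgn1 c) := by
      intro i
      simp [sgn1, Real.cosh_eq]
      ring
    simp_rw [h1]
    rw [Finset.prod_univ_sum, Fintype.piFinset_univ]
    simp [lin, Real.exp_sum]
  unfold cubeE
  rw [← h, Finset.prod_mul_distrib]
  simp

lemma E_exp_le {n : ℕ} (b : Fin n → ℝ) :
    cubeE n (fun x => Real.exp (lin n b x)) ≤ Real.exp ((∑ i, b i ^ 2) / 2) := by
  rw [E_exp, Finset.sum_div, Real.exp_sum]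
  apply Finset.prod_le_prod
  · intro i _; positivity
  · intro i _; exact Real.cosh_le_exp_half_sq _

lemma cosh_ge {u : ℝ} (hu : u ^ 2 ≤ 1) : Real.exp (u ^ 2 / 4) ≤ Real.cosh u := by
  have h1 : 1 + u ^ 2 / 2 ≤ Real.cosh u := by
    have h := Real.cosh_two_mul (u / 2)
    have h' := Real.cosh_sq (u / 2)
    have hs : (u / 2) ^ 2 ≤ Real.sinh (u / 2) ^ 2 := by
      rcases le_total 0 (u / 2) with h0 | h0
      · have := Real.self_le_sinh_iff.mpr h0
        nlinarith
      · have := Real.sinh_le_self_iff.mpr h0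
        nlinarith
    have e : 2 * (u / 2) = u := by ring
    rw [e] at h
    nlinarith
  have h2 : Real.exp (u ^ 2 / 4) ≤ 1 + u ^ 2 / 2 := by
    have h0 : (0:ℝ) ≤ u ^ 2 := sq_nonneg u
    have := Real.abs_exp_sub_one_sub_id_le (x := u ^ 2 / 4) (by rw [abs_of_nonneg (by positivity)]; linarith)
    have := (abs_le.mp this).2
    nlinarith
  linarith

lemma E_exp_ge {n : ℕ} (b : Fin n → ℝ) (hb : ∀ i, b i ^ 2 ≤ 1) :
    Real.exp ((∑ i, b i ^ 2) / 4) ≤ cubeE n (fun x => Real.exp (lin n b x)) := by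
  rw [E_exp, Finset.sum_div, Real.exp_sum]
  apply Finset.prod_le_prod
  · intro i _; positivity
  · intro i _; exact cosh_ge (hb i)

lemma lin_smul {n : ℕ} (c : ℝ) (b : Fin n → ℝ) (x : Fin n → Bool) :
    lin n (fun i => c * b i) x = c * lin n b x := by
  simp [lin, Finset.mul_sum, mul_assoc]

lemma E_mul_sgn {n : ℕ} (i : Fin n) (φ : (Fin n → Bool) → ℝ) :
    cubeE n (fun x => φ x * sgn1 (x i)) =
      (1 / 2) * cubeE n (fun x => sgn1 (x i) * (φ x - φ (fl i x))) := by
  have h := E_fl i (fun x => φ x * sgn1 (x i))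
  have h2 : ∀ x : Fin n → Bool, φ (fl i x) * sgn1 (fl i x i) = -1 * (φ (fl i x) * sgn1 (x i)) := by
    intro x
    simp [fl, sgn1_not]
  simp_rw [h2] at h
  have h3 : cubeE n (fun x => sgn1 (x i) * (φ x - φ (fl i x))) =
      cubeE n (fun x => φ x * sgn1 (x i) + -1 * (φ (fl i x) * sgn1 (x i))) := by
    congr 1; funext x; ring
  rw [h3, E_add, h]; ring

lemma E_mul_lin {n : ℕ} (b : Fin n → ℝ) (φ : (Fin n → Bool) → ℝ) :
    cubeE n (fun x => φ x * lin n b x) =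
      ∑ i, b i * cubeE n (fun x => φ x * sgn1 (x i)) := by
  simp_rw [← E_smul]
  rw [← E_sum]
  congr 1; funext x
  simp only [lin, Finset.mul_sum]
  apply Finset.sum_congr rfl
  intro i _; ring

lemma lin_mono {n : ℕ} (b : Fin n → ℝ) (hb : ∀ i, 0 ≤ b i) : Monotone (lin n b) := by
  intro x y hxy
  unfold lin
  apply Finset.sum_le_sum
  intro i _
  apply mul_le_mul_of_nonneg_left _ (hb i)
  have := hxy i
  revert this
  cases x i <;> cases y i <;> simp [sgn1]

lemma fkg_cube {n : ℕ} (f g : (Fin n → Bool) → ℝ) (hf0 : ∀ x, 0 ≤ f x) (hg0 : ∀ x, 0 ≤ g x)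
    (hf : Monotone f) (hg : Monotone g) :
    cubeE n f * cubeE n g ≤ cubeE n (fun x => f x * g x) := by
  have := fkg (μ := fun _ : Fin n → Bool => (1:ℝ)) (f := f) (g := g) (fun _ => zero_le_one)
    hf0 hg0 hf hg (fun _ _ => le_refl _)
  simp only [one_mul, Finset.sum_const, nsmul_eq_mul, mul_one] at this
  unfold cubeE
  have h2 : ((univ : Finset (Fin n → Bool)).card : ℝ) = 2 ^ n := by simp
  rw [h2] at this
  rw [div_mul_div_comm, div_le_div_iff₀ (by positivity) (by positivity)]
  have hp : (0:ℝ) < 2 ^ n := by positivity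
  nlinarith

lemma CS_cube {n : ℕ} (f g : (Fin n → Bool) → ℝ) :
    cubeE n (fun x => f x * g x) ^ 2 ≤ cubeE n (fun x => f x ^ 2) * cubeE n (fun x => g x ^ 2) := by
  unfold cubeE
  have := Finset.sum_mul_sq_le_sq_mul_sq univ f g
  rw [div_pow, div_mul_div_comm, ← pow_two]
  gcongr

lemma L_facts {p : ℝ} (hp : 0 < p) (hp2 : p ≤ 1 / 2) :
    Real.sqrt (Real.log (1 / p)) ^ 2 = Real.log (1 / p) ∧ 4 / 5 ≤ Real.sqrt (Real.log (1 / p)) ∧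
    Real.exp (-(Real.sqrt (Real.log (1 / p)) ^ 2)) = p := by
  have h1 : Real.log 2 ≤ Real.log (1 / p) := by
    apply Real.log_le_log (by norm_num)
    rw [le_div_iff₀ hp]; linarith
  have h2 := Real.log_two_gt_d9
  have h3 : Real.sqrt (Real.log (1 / p)) ^ 2 = Real.log (1 / p) := Real.sq_sqrt (by linarith)
  refine ⟨h3, ?_, ?_⟩
  · apply Real.le_sqrt_of_sq_le
    norm_num at *; linarith
  · rw [h3, one_div, Real.log_inv, neg_neg, Real.exp_log hp]

lemma hs_nonneg {n : ℕ} (a : Fin n → ℝ) (t : ℝ) (x : Fin n → Bool) : 0 ≤ halfspace n a t x := by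
  unfold halfspace; split_ifs <;> norm_num

lemma level_one {n : ℕ} (a : Fin n → ℝ) (t : ℝ) (ha : ∑ i, a i ^ 2 = 1)
    (hp : 0 < cubeE n (halfspace n a t)) (hp2 : cubeE n (halfspace n a t) ≤ 1 / 2) :
    cubeE n (fun x => halfspace n a t x * lin n a x) ≤
      7 / 2 * cubeE n (halfspace n a t) * Real.sqrt (Real.log (1 / cubeE n (halfspace n a t))) := by
  set p := cubeE n (halfspace n a t) with hpdef
  obtain ⟨-, hL, hLp⟩ := L_facts hp hp2
  set L := Real.sqrt (Real.log (1 / p))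
  have key : cubeE n (fun x => L * (halfspace n a t x * lin n a x) + (-(3 / 2 * L ^ 2)) * halfspace n a t x)
      ≤ cubeE n (fun x => Real.exp (-(3 / 2 * L ^ 2)) * Real.exp (lin n (fun i => L * a i) x)) := by
    apply E_mono
    intro x
    rw [← Real.exp_add, lin_smul]
    have h1 := Real.add_one_le_exp (-(3 / 2 * L ^ 2) + L * lin n a x)
    have h2 := Real.exp_pos (-(3 / 2 * L ^ 2) + L * lin n a x)
    unfold halfspace
    split_ifs <;> linarith
  rw [E_add, E_smul, E_smul, E_smul, ← hpdef] at key
  have h2 := E_exp_le (n := n) (fun i => L * a i)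
  have h3 : (∑ i, (L * a i) ^ 2) = L ^ 2 := by
    simp_rw [mul_pow]; rw [← Finset.mul_sum, ha, mul_one]
  rw [h3] at h2
  have h4 : Real.exp (-(3 / 2 * L ^ 2)) * cubeE n (fun x => Real.exp (lin n (fun i => L * a i) x)) ≤ p := by
    calc _ ≤ Real.exp (-(3 / 2 * L ^ 2)) * Real.exp (L ^ 2 / 2) := by gcongr
      _ = p := by rw [← Real.exp_add, ← hLp]; congr 1; ring
  have h5 : L * cubeE n (fun x => halfspace n a t x * lin n a x) ≤ L * (7 / 2 * p * L) := by
    have h6 : 1 ≤ 2 * L ^ 2 := by nlinarith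
    have : p ≤ 2 * L ^ 2 * p := by nlinarith
    nlinarith
  exact le_of_mul_le_mul_left h5 (by linarith)

/-- indicator of the window -/
def wind (n : ℕ) (a : Fin n → ℝ) (t s : ℝ) (x : Fin n → Bool) : ℝ :=
  if t < lin n a x ∧ lin n a x ≤ s then 1 else 0

lemma wind_nonneg {n : ℕ} (a : Fin n → ℝ) (t s : ℝ) (x : Fin n → Bool) : 0 ≤ wind n a t s x := by
  unfold wind; split_ifs <;> norm_num

/-- test function for the upper bound -/
def phiU (t A u : ℝ) : ℝ := if t < u then 1 + min 1 ((u - t) / (2 * A)) else 0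

lemma phiU_mono {t A u v : ℝ} (hA : 0 < A) (h : u ≤ v) : phiU t A u ≤ phiU t A v := by
  unfold phiU
  split_ifs with h1 h2 h2
  · have : (u - t) / (2 * A) ≤ (v - t) / (2 * A) := by gcongr
    have := min_le_min_left 1 this
    linarith
  · linarith
  · have : 0 ≤ (v - t) / (2 * A) := div_nonneg (by linarith) (by linarith)
    have := le_min zero_le_one this
    linarith
  · exact le_refl _

lemma phiU_gap {t A u d : ℝ} (hA : 0 < A) (hd : 0 ≤ d) (hdA : d ≤ A) (h1 : t < u)
    (h2 : u ≤ t + 2 * A) : d / A ≤ phiU t A u - phiU t A (u - 2 * d) := by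
  have e1 : (u - t) / (2 * A) ≤ 1 := by rw [div_le_one (by linarith)]; linarith
  have e0 : 0 ≤ (u - t) / (2 * A) := div_nonneg (by linarith) (by linarith)
  have hdA' : d / A ≤ 1 := by rw [div_le_one hA]; exact hdA
  unfold phiU
  rw [if_pos h1, min_eq_right e1]
  split_ifs with h3
  · have : (u - 2 * d - t) / (2 * A) = (u - t) / (2 * A) - d / A := by field_simp; ring
    have h4 := min_le_right 1 ((u - 2 * d - t) / (2 * A))
    rw [this] at h4 ⊢
    linarith
  · linarith

lemma upper_window {n : ℕ} (a : Fin n → ℝ) (t A : ℝ) (ht : 0 ≤ t) (ha0 : ∀ i, 0 ≤ a i)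
    (haA : ∀ i, a i ≤ A) (hA : 0 < A) (hA1 : A ≤ 1) (ha : ∑ i, a i ^ 2 = 1)
    (hp : 0 < cubeE n (halfspace n a t)) (hp2 : cubeE n (halfspace n a t) ≤ 1 / 2) :
    cubeE n (wind n a t (t + 2 * A)) ≤
      40 * cubeE n (halfspace n a t) *
        (A * Real.sqrt (Real.log (1 / cubeE n (halfspace n a t)))) := by
  have hl1 := level_one a t ha hp hp2
  obtain ⟨-, hL, -⟩ := L_facts hp hp2
  set p := cubeE n (halfspace n a t) with hpdef
  set L := Real.sqrt (Real.log (1 / p))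
  set a2 : Fin n → ℝ := fun i => a i ^ 2
  -- upper bound of the correlation
  have hU : cubeE n (fun x => phiU t A (lin n a x) * lin n a x) ≤ 7 * p * L := by
    calc _ ≤ cubeE n (fun x => 2 * (halfspace n a t x * lin n a x)) := by
          apply E_mono
          intro x
          unfold phiU halfspace
          split_ifs with h
          · have h4 := min_le_left 1 ((lin n a x - t) / (2 * A))
            nlinarith
          · simp
      _ ≤ _ := by rw [E_smul]; linarith
  -- lower bound of the correlation
  have hLo : cubeE n (fun x => (1 / A) * (wind n a t (t + 2 * A) x * ((1 + lin n a2 x) / 2))) ≤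
      cubeE n (fun x => phiU t A (lin n a x) * lin n a x) := by
    rw [E_mul_lin]
    have e : ∀ x : Fin n → Bool, (1 / A) * (wind n a t (t + 2 * A) x * ((1 + lin n a2 x) / 2)) =
        ∑ i, a i * (a i / A * (wind n a t (t + 2 * A) x * ((1 + sgn1 (x i)) / 2))) := by
      intro x
      have : (1 + lin n a2 x) / 2 = ∑ i, a i ^ 2 * ((1 + sgn1 (x i)) / 2) := by
        have ha' : ∑ i, a i ^ 2 = 1 := ha
        have : (1 + lin n a2 x) / 2 = (∑ i, a i ^ 2 + lin n a2 x) / 2 := by rw [ha']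
        rw [this]; unfold lin
        rw [← Finset.sum_add_distrib, Finset.sum_div]
        apply Finset.sum_congr rfl
        intro i _; simp only [a2]; ring
      rw [this, Finset.mul_sum, Finset.mul_sum]
      apply Finset.sum_congr rfl
      intro i _; ring
    simp_rw [e]
    rw [E_sum]
    apply Finset.sum_le_sum
    intro i _
    rw [E_smul]
    apply mul_le_mul_of_nonneg_left _ (ha0 i)
    -- E[φ x_i] = E[1{x_i=1}(φ(x) - φ(x^i))]
    have h1 : cubeE n (fun x => phiU t A (lin n a x) * sgn1 (x i)) =
        cubeE n (fun x => (1 + sgn1 (x i)) / 2 * (phiU t A (lin n a x) - phiU t A (lin n a (fl i x)))) := by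
      have e1 : ∀ x : Fin n → Bool, (1 + sgn1 (x i)) / 2 * (phiU t A (lin n a x) - phiU t A (lin n a (fl i x)))
          = (1 / 2) * (sgn1 (x i) * (phiU t A (lin n a x) - phiU t A (lin n a (fl i x)))) +
            ((1 / 2) * phiU t A (lin n a x) + (-(1 / 2)) * phiU t A (lin n a (fl i x))) := by
        intro x; ring
      simp_rw [e1]
      rw [E_add, E_add, E_smul, E_smul, E_smul, E_fl i (fun x => phiU t A (lin n a x)),
        E_mul_sgn i (fun x => phiU t A (lin n a x))]
      ring
    rw [h1]
    apply E_mono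
    intro x
    rw [lin_fl]
    rcases sgn1_cases (x i) with h | h
    · rw [h]
      norm_num
      unfold wind
      split_ifs with hw
      · rw [mul_one]; exact phiU_gap hA (ha0 i) (haA i) hw.1 hw.2
      · have := phiU_mono (t := t) hA (show lin n a x - 2 * a i ≤ lin n a x by linarith [ha0 i])
        linarith
    · rw [h]; norm_num
  rw [E_smul] at hLo
  -- the bad event
  have hbad : cubeE n (fun x => halfspace n a t x * (if lin n a2 x < -(1 / 2) then 1 else 0)) ≤
      p * (8 * A ^ 2) := by
    have hF := fkg_cube (halfspace n a t) (fun x => if lin n a2 x < -(1 / 2) then 0 else 1)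
      (hs_nonneg a t) (by intro x; split_ifs <;> norm_num)
      (by
        intro x y hxy
        have := lin_mono a ha0 hxy
        unfold halfspace
        split_ifs <;> first | linarith | norm_num)
      (by
        intro x y hxy
        have := lin_mono a2 (fun i => sq_nonneg _) hxy
        dsimp only
        split_ifs <;> first | linarith | norm_num)
    have e1 : cubeE n (fun x => halfspace n a t x * (if lin n a2 x < -(1 / 2) then 0 else 1)) +
        cubeE n (fun x => halfspace n a t x * (if lin n a2 x < -(1 / 2) then 1 else 0)) = p := by
      rw [← E_add, hpdef]
      congr 1; funext x; split_ifs <;> ring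
    have e2 : cubeE n (fun x => if lin n a2 x < -(1 / 2) then 0 else 1) +
        cubeE n (fun x => if lin n a2 x < -(1 / 2) then 1 else 0) = 1 := by
      rw [← E_add]
      conv_rhs => rw [← E_const (n := n) 1]
      congr 1; funext x; split_ifs <;> ring
    have hch : cubeE n (fun x => if lin n a2 x < -(1 / 2) then 1 else 0) ≤ 8 * A ^ 2 := by
      set l : ℝ := 1 / (2 * A ^ 2) with hl
      have hlp : 0 < l := by positivity
      have hlA : l * A ^ 2 = 1 / 2 := by rw [hl]; field_simp
      have h1 : cubeE n (fun x => if lin n a2 x < -(1 / 2) then 1 else 0) ≤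
          cubeE n (fun x => Real.exp (-(l / 2)) * Real.exp (lin n (fun i => (-l) * a2 i) x)) := by
        apply E_mono
        intro x
        rw [← Real.exp_add, lin_smul]
        split_ifs with h
        · apply Real.one_le_exp
          nlinarith
        · positivity
      rw [E_smul] at h1
      have h2 := E_exp_le (n := n) (fun i => (-l) * a2 i)
      have h3 : (∑ i, ((-l) * a2 i) ^ 2) / 2 ≤ l / 4 := by
        have : ∑ i, ((-l) * a2 i) ^ 2 ≤ ∑ i, l ^ 2 * A ^ 2 * a i ^ 2 := by
          apply Finset.sum_le_sum
          intro i _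
          simp only [a2]
          have h5 : a i ^ 2 ≤ A ^ 2 := by
            have := ha0 i; have := haA i; nlinarith
          have h6 : 0 ≤ l ^ 2 * a i ^ 2 := by positivity
          nlinarith
        rw [← Finset.mul_sum, ha] at this
        nlinarith
      have h4 : Real.exp (-(l / 2)) * cubeE n (fun x => Real.exp (lin n (fun i => (-l) * a2 i) x)) ≤
          Real.exp (-(l / 4)) := by
        calc _ ≤ Real.exp (-(l / 2)) * Real.exp (l / 4) := by
              gcongr
              exact h2.trans (Real.exp_le_exp.mpr h3)
          _ = _ := by rw [← Real.exp_add]; congr 1; ring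
      have h5 : Real.exp (-(l / 4)) ≤ 8 * A ^ 2 := by
        rw [Real.exp_neg]
        have h6 := Real.add_one_le_exp (l / 4)
        have h7 : 1 ≤ 8 * A ^ 2 * Real.exp (l / 4) := by nlinarith [sq_nonneg A]
        rw [inv_le_iff_one_le_mul₀ (Real.exp_pos _)]
        exact h7
      linarith
    nlinarith
  have hfin : cubeE n (wind n a t (t + 2 * A)) ≤
      cubeE n (fun x => 4 * (wind n a t (t + 2 * A) x * ((1 + lin n a2 x) / 2)) +
        halfspace n a t x * (if lin n a2 x < -(1 / 2) then 1 else 0)) := by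
    apply E_mono
    intro x
    have hlow : -1 ≤ lin n a2 x := by
      rw [← ha]; unfold lin; rw [← Finset.sum_neg_distrib]
      apply Finset.sum_le_sum
      intro i _
      have : 0 ≤ a i ^ 2 := sq_nonneg _
      simp only [a2]
      rcases sgn1_cases (x i) with h | h <;> rw [h] <;> linarith
    unfold wind halfspace
    by_cases hw : t < lin n a x ∧ lin n a x ≤ t + 2 * A
    · rw [if_pos hw, if_pos hw.1]
      split_ifs with h <;> linarith
    · rw [if_neg hw]
      split_ifs <;> norm_num
  rw [E_add, E_smul] at hfin
  set Q := cubeE n (fun x => wind n a t (t + 2 * A) x * ((1 + lin n a2 x) / 2))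
  have hQ : Q ≤ A * (7 * p * L) := by
    have : 1 / A * Q ≤ 7 * p * L := hLo.trans hU
    rw [one_div, inv_mul_le_iff₀ hA] at this
    exact this
  have hAL : p * (8 * A ^ 2) ≤ p * (12 * (A * L)) := by
    have : 8 * A ^ 2 ≤ 12 * (A * L) := by nlinarith
    gcongr
  nlinarith

lemma infl_le {n : ℕ} (a : Fin n → ℝ) (t A : ℝ) (ha0 : ∀ i, 0 ≤ a i)
    (haA : ∀ i, a i ≤ A) (i : Fin n) :
    infl n i (halfspace n a t) ≤ 2 * cubeE n (wind n a t (t + 2 * A)) ∧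
    infl n i (halfspace n a t) ≤ 2 * cubeE n (halfspace n a t) := by
  unfold infl
  rw [Pr_eq]
  constructor
  · have : 2 * cubeE n (wind n a t (t + 2 * A)) = cubeE n (fun x => wind n a t (t + 2 * A) x +
        wind n a t (t + 2 * A) (fl i x)) := by
      rw [E_add, E_fl i (wind n a t (t + 2 * A))]; ring
    rw [this]
    apply E_mono
    intro x
    have h1 := wind_nonneg a t (t + 2 * A) x
    have h2 := wind_nonneg a t (t + 2 * A) (fl i x)
    split_ifs with h
    · change halfspace n a t x ≠ halfspace n a t (fl i x) at h
      have h3 := lin_fl a i x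
      have h4 := ha0 i
      have h5 := haA i
      have h6 : |lin n a (fl i x) - lin n a x| ≤ 2 * A := by
        rw [abs_le]
        rcases sgn1_cases (x i) with h | h <;> rw [h] at h3 <;> constructor <;> linarith
      rw [abs_le] at h6
      unfold halfspace at h
      by_cases c1 : t < lin n a x <;> by_cases c2 : t < lin n a (fl i x)
      · simp [c1, c2] at h
      · have : wind n a t (t + 2 * A) x = 1 := by
          unfold wind; rw [if_pos ⟨c1, by linarith⟩]
        linarith
      · have : wind n a t (t + 2 * A) (fl i x) = 1 := by
          unfold wind; rw [if_pos ⟨c2, by linarith⟩]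
        linarith
      · simp [c1, c2] at h
    · linarith
  · have : 2 * cubeE n (halfspace n a t) = cubeE n (fun x => halfspace n a t x +
        halfspace n a t (fl i x)) := by
      rw [E_add, E_fl i (halfspace n a t)]; ring
    rw [this]
    apply E_mono
    intro x
    split_ifs with h
    · change halfspace n a t x ≠ halfspace n a t (fl i x) at h
      unfold halfspace at h ⊢
      by_cases c1 : t < lin n a x <;> by_cases c2 : t < lin n a (fl i x) <;> simp [c1, c2] at h ⊢
    · exact add_nonneg (hs_nonneg _ _ _) (hs_nonneg _ _ _)

/-- ramp function for the lower bound -/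
def ramp (t A u : ℝ) : ℝ := max 0 (min 1 ((u - (t - A)) / (2 * A)))

lemma ramp_mono {t A u v : ℝ} (hA : 0 < A) (h : u ≤ v) : ramp t A u ≤ ramp t A v := by
  unfold ramp
  have : (u - (t - A)) / (2 * A) ≤ (v - (t - A)) / (2 * A) := by gcongr
  exact max_le_max_left _ (min_le_min_left _ this)

lemma ramp_lo {t A u : ℝ} (hA : 0 < A) (h : u ≤ t - A) : ramp t A u = 0 := by
  unfold ramp
  apply max_eq_left
  exact (min_le_right _ _).trans (div_nonpos_of_nonpos_of_nonneg (by linarith) (by linarith))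

lemma ramp_hi {t A u : ℝ} (hA : 0 < A) (h : t + A ≤ u) : ramp t A u = 1 := by
  unfold ramp
  have : 1 ≤ (u - (t - A)) / (2 * A) := by rw [le_div_iff₀ (by linarith)]; linarith
  rw [min_eq_left this]; norm_num

lemma ramp_lip {t A u v : ℝ} (hA : 0 < A) (h : u ≤ v) :
    ramp t A v - ramp t A u ≤ (v - u) / (2 * A) := by
  have e : (v - (t - A)) / (2 * A) = (u - (t - A)) / (2 * A) + (v - u) / (2 * A) := by
    rw [← add_div]; congr 1; ring
  have e0 : 0 ≤ (v - u) / (2 * A) := div_nonneg (by linarith) (by linarith)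
  unfold ramp
  rw [e]
  generalize (u - (t - A)) / (2 * A) = q at *
  generalize (v - u) / (2 * A) = r at *
  rcases max_cases 0 (min 1 (q + r)) with h1 | h1 <;> rcases min_cases 1 (q + r) with h2 | h2 <;>
  rcases max_cases 0 (min 1 q) with h3 | h3 <;> rcases min_cases 1 q with h4 | h4 <;> linarith

lemma ramp_diff {t A u v d J1 J2 : ℝ} (hA : 0 < A) (h : v = u + 2 * d) (hd : 0 ≤ d) (hdA : d ≤ A)
    (hJ1 : J1 = if t - A < u ∧ u ≤ t + A then 1 else 0)
    (hJ2 : J2 = if t - A < v ∧ v ≤ t + A then 1 else 0) :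
    ramp t A v - ramp t A u ≤ d / A * (J1 + J2) := by
  have h1 := ramp_lip (t := t) hA (show u ≤ v by linarith)
  have e : (v - u) / (2 * A) = d / A := by rw [h]; field_simp; ring
  rw [e] at h1
  have h0 : 0 ≤ d / A := div_nonneg hd hA.le
  by_cases c1 : t - A < u ∧ u ≤ t + A
  · rw [if_pos c1] at hJ1
    have : 0 ≤ J2 := by rw [hJ2]; split_ifs <;> norm_num
    nlinarith
  by_cases c2 : t - A < v ∧ v ≤ t + A
  · rw [if_pos c2] at hJ2
    have : 0 ≤ J1 := by rw [hJ1]; split_ifs <;> norm_num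
    nlinarith
  rw [if_neg c1] at hJ1
  rw [if_neg c2] at hJ2
  rw [hJ1, hJ2]
  push Not at c1 c2
  by_cases c3 : t - A < u
  · have := c1 c3
    rw [ramp_hi hA this.le, ramp_hi hA (by linarith)]; simp
  · push Not at c3
    by_cases c4 : t - A < v
    · have := c2 c4
      linarith
    · push Not at c4
      rw [ramp_lo hA c3, ramp_lo hA c4]; simp

lemma J_ge {n : ℕ} (b : Fin n → ℝ) (t A R : ℝ) (ht : 0 ≤ t) (hb0 : ∀ i, 0 ≤ b i)
    (hbA : ∀ i, b i ≤ A) (hA : 0 < A) (hb : ∑ i, b i ^ 2 ≤ 1) (hR : t + A ≤ R) :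
    A * R * cubeE n (halfspace n b R) ≤ cubeE n (wind n b (t - A) (t + A)) := by
  set J := cubeE n (wind n b (t - A) (t + A)) with hJ
  have hJ0 : 0 ≤ J := E_nonneg (wind_nonneg _ _ _)
  have h1 : cubeE n (fun x => ramp t A (lin n b x) * lin n b x) ≤ J / A := by
    rw [E_mul_lin]
    have : ∀ i ∈ (univ : Finset (Fin n)), b i * cubeE n (fun x => ramp t A (lin n b x) * sgn1 (x i)) ≤
        b i ^ 2 * (J / A) := by
      intro i _
      have h2 : cubeE n (fun x => ramp t A (lin n b x) * sgn1 (x i)) ≤ b i / A * J := by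
        rw [E_mul_sgn i (fun x => ramp t A (lin n b x))]
        have h3 : cubeE n (fun x => sgn1 (x i) * (ramp t A (lin n b x) - ramp t A (lin n b (fl i x)))) ≤
            cubeE n (fun x => b i / A * (wind n b (t - A) (t + A) x + wind n b (t - A) (t + A) (fl i x))) := by
          apply E_mono
          intro x
          have hf := lin_fl b i x
          rcases sgn1_cases (x i) with h | h
          · rw [h] at hf ⊢
            have := ramp_diff (t := t) (u := lin n b (fl i x)) (v := lin n b x) (d := b i) hA
              (by linarith) (hb0 i) (hbA i) (J1 := wind n b (t - A) (t + A) (fl i x))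
              (J2 := wind n b (t - A) (t + A) x) rfl rfl
            linarith
          · rw [h] at hf ⊢
            have := ramp_diff (t := t) (v := lin n b (fl i x)) (u := lin n b x) (d := b i) hA
              (by linarith) (hb0 i) (hbA i) (J2 := wind n b (t - A) (t + A) (fl i x))
              (J1 := wind n b (t - A) (t + A) x) rfl rfl
            linarith
        rw [E_smul, E_add, E_fl i (wind n b (t - A) (t + A)), ← hJ] at h3
        linarith
      calc _ ≤ b i * (b i / A * J) := mul_le_mul_of_nonneg_left h2 (hb0 i)
        _ = _ := by ring
    have h4 := Finset.sum_le_sum this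
    rw [← Finset.sum_mul] at h4
    have h5 : 0 ≤ J / A := by positivity
    calc _ ≤ _ := h4
      _ ≤ 1 * (J / A) := by gcongr
      _ = _ := one_mul _
  have h2 : cubeE n (fun x => R * (halfspace n b R x + halfspace n b R (ng x))) ≤
      cubeE n (fun x => ramp t A (lin n b x) * lin n b x +
        ramp t A (lin n b (ng x)) * lin n b (ng x)) := by
    apply E_mono
    intro x
    unfold halfspace
    rw [lin_ng]
    generalize lin n b x = u
    by_cases c1 : R < u
    · rw [if_pos c1, if_neg (by linarith), ramp_hi hA (by linarith), ramp_lo hA (by linarith)]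
      linarith
    by_cases c2 : R < -u
    · rw [if_neg c1, if_pos c2, ramp_lo hA (by linarith), ramp_hi hA (by linarith)]
      linarith
    rw [if_neg c1, if_neg c2]
    rcases le_total 0 u with h | h
    · have := ramp_mono (t := t) hA (show -u ≤ u by linarith)
      nlinarith
    · have := ramp_mono (t := t) hA (show u ≤ -u by linarith)
      nlinarith
  rw [E_smul, E_add, E_add, E_ng (halfspace n b R),
    E_ng (fun x => ramp t A (lin n b x) * lin n b x)] at h2
  have h3 : R * cubeE n (halfspace n b R) ≤ J / A := by linarith
  rw [le_div_iff₀ hA] at h3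
  linarith

lemma tail_ge {n : ℕ} (a : Fin n → ℝ) (t A : ℝ) (ht : 0 ≤ t) (ha0 : ∀ i, 0 ≤ a i)
    (haA : ∀ i, a i ≤ A) (ha : ∑ i, a i ^ 2 = 1) (htA : 8 * (t + 1) * A ≤ 1) :
    1 / 4 * Real.exp (-(96 * (t + 1) ^ 2)) ≤ cubeE n (halfspace n a t) := by
  set l : ℝ := 8 * (t + 1) with hl
  set p := cubeE n (halfspace n a t) with hpdef
  have hs : ∀ c : ℝ, ∑ i, (c * a i) ^ 2 = c ^ 2 := by
    intro c; simp_rw [mul_pow]; rw [← Finset.mul_sum, ha, mul_one]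
  have hlo := E_exp_ge (n := n) (fun i => l * a i) (by
    intro i
    have h1 : 0 ≤ l * a i := mul_nonneg (by linarith) (ha0 i)
    have h2 : l * a i ≤ l * A := mul_le_mul_of_nonneg_left (haA i) (by linarith)
    nlinarith)
  have hhi := E_exp_le (n := n) (fun i => (2 * l) * a i)
  rw [hs] at hlo hhi
  set m := cubeE n (fun x => Real.exp (lin n (fun i => l * a i) x)) with hm
  have hCS := CS_cube (n := n) (fun x => Real.exp (lin n (fun i => l * a i) x)) (halfspace n a t)
  have e1 : cubeE n (fun x => Real.exp (lin n (fun i => l * a i) x) ^ 2) =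
      cubeE n (fun x => Real.exp (lin n (fun i => (2 * l) * a i) x)) := by
    congr 1; funext x
    rw [← Real.exp_nat_mul, lin_smul, lin_smul]; congr 1; push_cast; ring
  have e2 : cubeE n (fun x => halfspace n a t x ^ 2) = p := by
    rw [hpdef]; congr 1; funext x; unfold halfspace; split_ifs <;> norm_num
  rw [e1, e2] at hCS
  have hp0 : 0 ≤ p := E_nonneg (hs_nonneg a t)
  have hθ : Real.exp (l * t) ≤ 1 / 2 * Real.exp (l ^ 2 / 4) := by
    have h1 : Real.exp (l ^ 2 / 4) = Real.exp (l * t) * Real.exp (l ^ 2 / 4 - l * t) := by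
      rw [← Real.exp_add]; congr 1; ring
    have h2 := Real.add_one_le_exp (l ^ 2 / 4 - l * t)
    have h3 : 1 ≤ l ^ 2 / 4 - l * t := by rw [hl]; nlinarith
    have h4 := Real.exp_pos (l * t)
    rw [h1]; nlinarith
  have hsplit : m ≤ cubeE n (fun x => Real.exp (l * t) +
      Real.exp (lin n (fun i => l * a i) x) * halfspace n a t x) := by
    apply E_mono
    intro x
    have h2 := Real.exp_pos (l * t)
    unfold halfspace
    split_ifs with h
    · linarith
    · rw [lin_smul]
      have : Real.exp (l * lin n a x) ≤ Real.exp (l * t) := by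
        apply Real.exp_le_exp.mpr
        apply mul_le_mul_of_nonneg_left (by linarith) (by linarith)
      linarith
  rw [E_add, E_const] at hsplit
  set Q := cubeE n (fun x => Real.exp (lin n (fun i => l * a i) x) * halfspace n a t x)
  have hQ : 1 / 2 * Real.exp (l ^ 2 / 4) ≤ Q := by linarith
  have hQ2 : (1 / 2 * Real.exp (l ^ 2 / 4)) ^ 2 ≤ Real.exp ((2 * l) ^ 2 / 2) * p := by
    calc _ ≤ Q ^ 2 := by gcongr
      _ ≤ _ := hCS
      _ ≤ _ := by gcongr
  have e3 : (1 / 2 * Real.exp (l ^ 2 / 4)) ^ 2 =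
      Real.exp ((2 * l) ^ 2 / 2) * (1 / 4 * Real.exp (-(96 * (t + 1) ^ 2))) := by
    rw [mul_pow, ← Real.exp_nat_mul]
    rw [show ∀ y z : ℝ, y * (1 / 4 * z) = 1 / 4 * (y * z) by intros; ring, ← Real.exp_add]
    congr 1
    · norm_num
    · congr 1; rw [hl]; push_cast; ring
  rw [e3] at hQ2
  exact le_of_mul_le_mul_left hQ2 (Real.exp_pos _)

set_option maxHeartbeats 1600000 in
lemma lower_core {n : ℕ} (i0 : Fin n) (a : Fin n → ℝ) (t : ℝ) (ht : 0 ≤ t) (ha0 : ∀ i, 0 ≤ a i)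
    (haA : ∀ i, a i ≤ a i0) (hA : 0 < a i0) (ha : ∑ i, a i ^ 2 = 1)
    (hp : 0 < cubeE n (halfspace n a t)) (hp2 : cubeE n (halfspace n a t) ≤ 1 / 2) :
    Real.exp (-1536) / 2048 * cubeE n (halfspace n a t) *
      min 1 (a i0 * Real.sqrt (Real.log (1 / cubeE n (halfspace n a t)))) ≤
    infl n i0 (halfspace n a t) := by
  set b : Fin n → ℝ := Function.update a i0 0 with hbdef
  have hbi : ∀ i, b i = if i = i0 then 0 else a i := by
    intro i; simp [b, Function.update_apply]
  have hlin : ∀ x, lin n b x = lin n a x - a i0 * sgn1 (x i0) := by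
    intro x
    have : lin n a x - lin n b x = a i0 * sgn1 (x i0) := by
      unfold lin
      rw [← Finset.sum_sub_distrib, Finset.sum_eq_single i0]
      · rw [hbi]; simp
      · intro j _ hj; rw [hbi]; simp [hj]
      · simp
    linarith
  have hb0 : ∀ i, 0 ≤ b i := by
    intro i; rw [hbi]; split_ifs <;> [exact le_refl _; exact ha0 i]
  have hbA : ∀ i, b i ≤ a i0 := by
    intro i; rw [hbi]; split_ifs <;> [exact hA.le; exact haA i]
  have hb : ∑ i, b i ^ 2 ≤ 1 := by
    rw [← ha]
    apply Finset.sum_le_sum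
    intro i _
    rw [hbi]; split_ifs
    · simpa using sq_nonneg (a i)
    · exact le_refl _
  set A := a i0 with hAdef
  have hJR := fun R hR => J_ge b t A R ht hb0 hbA hA hb hR
  set J := cubeE n (wind n b (t - A) (t + A)) with hJ
  have hJI : J ≤ infl n i0 (halfspace n a t) := by
    unfold infl
    rw [Pr_eq]
    apply E_mono
    intro x
    unfold wind
    by_cases c : t - A < lin n b x ∧ lin n b x ≤ t + A
    · rw [if_pos c, if_pos]
      change halfspace n a t x ≠ halfspace n a t (fl i0 x)
      unfold halfspace
      rw [lin_fl]
      obtain ⟨c1, c2⟩ := c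
      rw [hlin] at c1 c2
      rcases sgn1_cases (x i0) with h | h <;> rw [h] at c1 c2 ⊢
      · rw [if_pos (by linarith), if_neg (by linarith)]; norm_num
      · rw [if_neg (by linarith), if_pos (by linarith)]; norm_num
    · rw [if_neg c]; split_ifs <;> norm_num
  refine le_trans ?_ hJI
  have hpJ : cubeE n (halfspace n a t) ≤ cubeE n (halfspace n b (t + A)) + J := by
    rw [hJ, ← E_add]
    apply E_mono
    intro x
    have h1 := hlin x
    unfold halfspace wind
    by_cases c : t < lin n a x
    · rw [if_pos c]
      have h2 : t - A < lin n b x := by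
        rcases sgn1_cases (x i0) with h | h <;> rw [h] at h1 <;> linarith
      by_cases c2 : t + A < lin n b x
      · rw [if_pos c2]; split_ifs <;> norm_num
      · rw [if_neg c2, if_pos ⟨h2, not_lt.mp c2⟩]; norm_num
    · rw [if_neg c]; split_ifs <;> norm_num
  have hL := L_facts hp hp2
  have htail := fun t' ht' htA' => tail_ge a t' A ht' ha0 haA ha htA'
  set p := cubeE n (halfspace n a t) with hpdef
  set L := Real.sqrt (Real.log (1 / p)) with hLdef
  obtain ⟨hLsq, hL1, hLp⟩ := hL
  have hAL : 0 ≤ A * L := mul_nonneg hA.le (by linarith)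
  have hmin1 : min 1 (A * L) ≤ 1 := min_le_left _ _
  have hmin2 : min 1 (A * L) ≤ A * L := min_le_right _ _
  have hmin0 : 0 ≤ min 1 (A * L) := le_min zero_le_one hAL
  have hc : Real.exp (-1536) ≤ 1 := Real.exp_le_one_iff.mpr (by norm_num)
  have hc0 := Real.exp_pos (-1536)
  set c := Real.exp (-1536) with hcdef
  set M := min 1 (A * L)
  -- two sufficient conditions
  have suff1 : p / 2048 ≤ J → c / 2048 * p * M ≤ J := by
    intro h
    have : c / 2048 * p * M ≤ 1 / 2048 * p * 1 := by gcongr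
    linarith
  have suff2 : p * (A * L) / 2048 ≤ J → c / 2048 * p * M ≤ J := by
    intro h
    have : c / 2048 * p * M ≤ 1 / 2048 * p * (A * L) := by gcongr
    linarith
  by_cases hJp : p / 2 ≤ J
  · apply suff1; linarith
  push Not at hJp
  have hmain : A * (t + A) * (p / 2) ≤ J := by
    refine le_trans ?_ (hJR (t + A) le_rfl)
    gcongr
    linarith
  by_cases hA32 : 1 / 32 ≤ A
  · apply suff1
    have : 1 / 1024 ≤ A * (t + A) := by nlinarith
    nlinarith
  push Not at hA32
  by_cases ht1 : t < 1
  · have h1 := hJR 2 (by linarith)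
    have h2 := htail 3 (by norm_num) (by linarith)
    have h3 : cubeE n (halfspace n a 3) ≤ cubeE n (halfspace n b 2) := by
      apply E_mono
      intro x
      have h1 := hlin x
      unfold halfspace
      by_cases c : 3 < lin n a x
      · rw [if_pos c, if_pos]
        rcases sgn1_cases (x i0) with h | h <;> rw [h] at h1 <;> linarith
      · rw [if_neg c]; split_ifs <;> norm_num
    have e : -(96 * ((3:ℝ) + 1) ^ 2) = -1536 := by norm_num
    rw [e, ← hcdef] at h2
    have h4 : A * 2 * (1 / 4 * c) ≤ J := by
      refine le_trans ?_ h1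
      gcongr
      linarith
    have hpL : p * L ≤ 1 := by
      have h5 : L ^ 2 ≤ 1 / p := by
        rw [hLsq]
        have := Real.log_le_sub_one_of_pos (show 0 < 1 / p by positivity)
        linarith
      rw [le_div_iff₀ hp] at h5
      have : (p * L) ^ 2 ≤ 1 := by nlinarith
      nlinarith
    have h6 : c / 2048 * p * M ≤ c / 2048 * p * (A * L) := by gcongr
    have h7 : c / 2048 * p * (A * L) = c / 2048 * A * (p * L) := by ring
    have h8 : c / 2048 * A * (p * L) ≤ c / 2048 * A * 1 := by gcongr
    nlinarith [mul_pos hc0 hA]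
  push Not at ht1
  by_cases htA : 8 * (t + 1) * A ≤ 1
  · apply suff2
    have h1 := htail t ht htA
    have h2 : L ^ 2 ≤ 400 * t ^ 2 := by
      have h3 := Real.log_le_log (by positivity) h1
      rw [Real.log_mul (by norm_num) (by positivity), Real.log_exp] at h3
      have h4 : -3 ≤ Real.log (1 / 4) := by
        have := Real.one_sub_inv_le_log_of_pos (show (0:ℝ) < 1 / 4 by norm_num)
        norm_num at this ⊢
        linarith
      rw [hLsq, one_div, Real.log_inv]
      nlinarith
    have h3 : L ≤ 20 * t := by
      apply le_of_sq_le_sq _ (by linarith)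
      linarith
    have h4 : p * (A * L) ≤ p * (A * (20 * t)) := by gcongr
    have h5 : 0 ≤ A * A * p := by positivity
    have h6 : 0 ≤ A * t * p := by positivity
    linarith
  · apply suff1
    push Not at htA
    have h0 : 0 ≤ A * A := by positivity
    have h1 : 1 / 16 ≤ A * (t + A) := by linarith
    have h2 : 1 / 16 * (p / 2) ≤ A * (t + A) * (p / 2) := by gcongr
    linarith

lemma hs_zero {n : ℕ} (a : Fin n → ℝ) (t : ℝ) (ht : t < 0)
    (hp2 : cubeE n (halfspace n a t) ≤ 1 / 2) : halfspace n a t = halfspace n a 0 := by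
  have hg : ∀ x : Fin n → Bool, 0 ≤ halfspace n a t x + halfspace n a t (ng x) - 1 := by
    intro x
    unfold halfspace
    rw [lin_ng]
    split_ifs <;> first | linarith | norm_num
  have hE : cubeE n (fun x => halfspace n a t x + halfspace n a t (ng x) - 1) ≤ 0 := by
    have : cubeE n (fun x => halfspace n a t x + halfspace n a t (ng x) - 1) =
      cubeE n (fun x => halfspace n a t x + halfspace n a t (ng x) + (fun _ => -1) x) := rfl
    rw [this, E_add, E_add, E_ng (halfspace n a t), E_const]
    linarith
  have hS : ∑ x, (halfspace n a t x + halfspace n a t (ng x) - 1) = 0 := by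
    apply le_antisymm
    · unfold cubeE at hE
      by_contra h
      push Not at h
      have : 0 < (∑ x, (halfspace n a t x + halfspace n a t (ng x) - 1)) / 2 ^ n := by positivity
      linarith
    · exact Finset.sum_nonneg (fun x _ => hg x)
  have h0 := (Finset.sum_eq_zero_iff_of_nonneg (fun x _ => hg x)).mp hS
  funext x
  have h1 := h0 x (mem_univ x)
  unfold halfspace at h1 ⊢
  rw [lin_ng] at h1
  by_cases c1 : t < lin n a x
  · by_cases c2 : t < -lin n a x
    · rw [if_pos c1, if_pos c2] at h1; norm_num at h1
    · rw [if_pos c1, if_pos (by linarith)]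
  · rw [if_neg c1, if_neg (by linarith)]

lemma core {n : ℕ} (hn : 0 < n) (a : Fin n → ℝ) (t : ℝ) (ht : 0 ≤ t) (ha0 : ∀ i, 0 ≤ a i)
    (hmono : ∀ i j : Fin n, i ≤ j → a j ≤ a i) (ha : ∑ i, a i ^ 2 = 1)
    (hp : 0 < cubeE n (halfspace n a t)) (hp2 : cubeE n (halfspace n a t) ≤ 1 / 2) :
    Real.exp (-1536) / 2048 * cubeE n (halfspace n a t) *
            min 1 (a ⟨0, hn⟩ * Real.sqrt (Real.log (1 / cubeE n (halfspace n a t)))) ≤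
          (univ.sup' ⟨⟨0, hn⟩, mem_univ _⟩ fun i => infl n i (halfspace n a t)) ∧
        (univ.sup' ⟨⟨0, hn⟩, mem_univ _⟩ fun i => infl n i (halfspace n a t)) ≤
          80 * cubeE n (halfspace n a t) *
            min 1 (a ⟨0, hn⟩ * Real.sqrt (Real.log (1 / cubeE n (halfspace n a t)))) := by
  have haA : ∀ i, a i ≤ a ⟨0, hn⟩ := fun i => hmono _ _ (Fin.mk_le_of_le_val (Nat.zero_le _))
  have hA : 0 < a ⟨0, hn⟩ := by
    by_contra h
    have h1 : ∀ i, a i = 0 := fun i => le_antisymm ((haA i).trans (not_lt.mp h)) (ha0 i)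
    simp [h1] at ha
  have hA1 : a ⟨0, hn⟩ ≤ 1 := by
    have : a ⟨0, hn⟩ ^ 2 ≤ 1 := by
      rw [← ha]
      exact Finset.single_le_sum (f := fun i => a i ^ 2) (fun i _ => sq_nonneg _) (mem_univ _)
    nlinarith
  constructor
  · exact (lower_core ⟨0, hn⟩ a t ht ha0 haA hA ha hp hp2).trans
      (Finset.le_sup' (fun i => infl n i (halfspace n a t)) (mem_univ _))
  · apply Finset.sup'_le
    intro i _
    have h1 := infl_le a t _ ha0 haA i
    have h2 := upper_window a t _ ht ha0 haA hA hA1 ha hp hp2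
    rcases min_cases (1:ℝ) (a ⟨0, hn⟩ * Real.sqrt (Real.log (1 / cubeE n (halfspace n a t))))
      with h | h <;> rw [h.1]
    · linarith [h1.2]
    · linarith [h1.1]

/-- **The maximal influence of a halfspace.** There are universal constants
`c₁, c₂ > 0` such that for any halfspace `f = 1{∑ aᵢxᵢ > t}` with `∑ aᵢ² = 1`,
`a₁ ≥ ... ≥ aₙ ≥ 0` and `0 < E[f] ≤ 1/2`:
`c₁·E[f]·min(1, a₁√(log(1/E[f]))) ≤ maxᵢ Iᵢ(f) ≤ c₂·E[f]·min(1, a₁√(log(1/E[f])))`. -/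
theorem max_influence_halfspace :
    ∃ c₁ c₂ : ℝ, 0 < c₁ ∧ 0 < c₂ ∧
      ∀ (n : ℕ) (hn : 0 < n) (a : Fin n → ℝ) (t : ℝ),
        (∀ i, 0 ≤ a i) → (∀ i j : Fin n, i ≤ j → a j ≤ a i) →
        (∑ i, (a i) ^ 2) = 1 →
        0 < cubeE n (halfspace n a t) → cubeE n (halfspace n a t) ≤ 1 / 2 →
        c₁ * cubeE n (halfspace n a t) *
            min 1 (a ⟨0, hn⟩ * Real.sqrt (Real.log (1 / cubeE n (halfspace n a t)))) ≤
          (univ.sup' ⟨⟨0, hn⟩, mem_univ _⟩ fun i => infl n i (halfspace n a t)) ∧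
        (univ.sup' ⟨⟨0, hn⟩, mem_univ _⟩ fun i => infl n i (halfspace n a t)) ≤
          c₂ * cubeE n (halfspace n a t) *
            min 1 (a ⟨0, hn⟩ * Real.sqrt (Real.log (1 / cubeE n (halfspace n a t)))) := by
  refine ⟨Real.exp (-1536) / 2048, 80, by positivity, by norm_num, ?_⟩
  intro n hn a t ha0 hmono ha hp hp2
  rcases le_or_gt 0 t with ht | ht
  · exact core hn a t ht ha0 hmono ha hp hp2
  · have e := hs_zero a t ht hp2
    rw [e] at hp hp2 ⊢
    exact core hn a 0 le_rfl ha0 hmono ha hp hp2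

end
end

section
/- Let l(x) = ∑ a_i x_i with ∑ a_i² = 1, let m ≥ max_i |a_i|, t ≥ -m, and ε = min(1/2, Pr[l(x) > t]) with x uniform on {-1,1}^n. Then Pr[l(x) ∈ (t, t+2m]] = Θ(ε·min(1, m·√(log(1/ε)))), i.e., there exist universal constants c₁, c₂ > 0 with c₁·ε·min(1, m√(log(1/ε))) ≤ Pr[l(x) ∈ (t, t+2m]] ≤ c₂·ε·min(1, m√(log(1/ε))). -/
open Finset

noncomputable section
open scoped Classical

namespace LFS

/-- Flip one coordinate. -/
def fl {n : ℕ} (x : Fin n → Bool) (i : Fin n) : Fin n → Bool := Function.update x i (!x i)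

lemma fl_fl {n : ℕ} (x : Fin n → Bool) (i : Fin n) : fl (fl x i) i = x := by
  simp [fl]

lemma sum_fl {n : ℕ} (F : (Fin n → Bool) → ℝ) (i : Fin n) : ∑ x, F (fl x i) = ∑ x, F x :=
  Fintype.sum_equiv (Function.Involutive.toPerm (fun x => fl x i) (fun x => fl_fl x i)) _ _
    (fun _ => rfl)

lemma sgn1_not (b : Bool) : sgn1 (!b) = - sgn1 b := by
  cases b <;> simp [sgn1]

lemma sgn1_sq (b : Bool) : sgn1 b ^ 2 = 1 := by
  cases b <;> simp [sgn1]

lemma abs_sgn1 (b : Bool) : |sgn1 b| = 1 := by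
  cases b <;> simp [sgn1]

lemma lin_fl {n : ℕ} (a : Fin n → ℝ) (x : Fin n → Bool) (i : Fin n) :
    lin n a (fl x i) = lin n a x - 2 * (a i * sgn1 (x i)) := by
  have h : lin n a (fl x i) - lin n a x = - 2 * (a i * sgn1 (x i)) := by
    unfold lin
    rw [← Finset.sum_sub_distrib, Finset.sum_eq_single i]
    · simp [fl, sgn1_not]; ring
    · intro j _ hj
      simp [fl, hj]
    · simp
  linarith

lemma cubePr_eq (n : ℕ) (P : (Fin n → Bool) → Prop) :
    cubePr n P = cubeE n (fun x => if P x then 1 else 0) := by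
  simp [cubePr, cubeE, Finset.sum_boole]

lemma cubeE_mono {n : ℕ} {f g : (Fin n → Bool) → ℝ} (h : ∀ x, f x ≤ g x) :
    cubeE n f ≤ cubeE n g := by
  unfold cubeE
  gcongr
  exact h _

lemma cubeE_add {n : ℕ} (f g : (Fin n → Bool) → ℝ) :
    cubeE n (fun x => f x + g x) = cubeE n f + cubeE n g := by
  simp [cubeE, Finset.sum_add_distrib, add_div]

lemma cubeE_smul {n : ℕ} (c : ℝ) (f : (Fin n → Bool) → ℝ) :
    cubeE n (fun x => c * f x) = c * cubeE n f := by
  simp [cubeE, ← Finset.mul_sum, mul_div_assoc]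

lemma cubeE_fl {n : ℕ} (f : (Fin n → Bool) → ℝ) (i : Fin n) :
    cubeE n (fun x => f (fl x i)) = cubeE n f := by
  simp only [cubeE, sum_fl]

lemma cubeE_sum {n : ℕ} {ι : Type*} (s : Finset ι) (f : ι → (Fin n → Bool) → ℝ) :
    cubeE n (fun x => ∑ i ∈ s, f i x) = ∑ i ∈ s, cubeE n (f i) := by
  simp only [cubeE]
  rw [Finset.sum_comm, Finset.sum_div]

lemma cubePr_nonneg (n : ℕ) (P : (Fin n → Bool) → Prop) : 0 ≤ cubePr n P := by
  unfold cubePr; positivity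

lemma cubePr_le_one (n : ℕ) (P : (Fin n → Bool) → Prop) : cubePr n P ≤ 1 := by
  unfold cubePr
  rw [div_le_one (by positivity)]
  have := Finset.card_filter_le (univ : Finset (Fin n → Bool)) P
  have h2 : (univ : Finset (Fin n → Bool)).card = 2 ^ n := by simp
  rw [h2] at this
  exact_mod_cast this

lemma cubePr_mono {n : ℕ} {P R : (Fin n → Bool) → Prop} (h : ∀ x, P x → R x) :
    cubePr n P ≤ cubePr n R := by
  rw [cubePr_eq, cubePr_eq]
  refine cubeE_mono fun x => ?_
  by_cases hp : P x
  · simp [hp, h x hp]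
  · simp only [hp, if_false]; split_ifs <;> norm_num

lemma cubePr_add_disj {n : ℕ} {P R S : (Fin n → Bool) → Prop} (h : ∀ x, S x ↔ P x ∨ R x)
    (hd : ∀ x, P x → ¬ R x) : cubePr n S = cubePr n P + cubePr n R := by
  rw [cubePr_eq, cubePr_eq, cubePr_eq, ← cubeE_add]
  congr 1
  ext x
  have := h x
  have := hd x
  by_cases hp : P x <;> by_cases hr : R x <;> simp_all

lemma prod_sum_bool {n : ℕ} (g : Fin n → Bool → ℝ) :
    ∑ x : Fin n → Bool, ∏ i, g i (x i) = ∏ i, (g i true + g i false) := by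
  have := Finset.prod_univ_sum (fun _ : Fin n => (univ : Finset Bool)) g
  simp only [Fintype.piFinset_univ, Fintype.sum_bool] at this
  exact this.symm

lemma mgf_le {n : ℕ} (a : Fin n → ℝ) (ha : ∑ i, (a i) ^ 2 = 1) (r : ℝ) :
    cubeE n (fun x => Real.exp (r * lin n a x)) ≤ Real.exp (r ^ 2 / 2) := by
  unfold cubeE
  rw [div_le_iff₀ (by positivity)]
  have h1 : ∀ x : Fin n → Bool, Real.exp (r * lin n a x) =
      ∏ i, Real.exp (r * (a i * sgn1 (x i))) := by
    intro x
    rw [← Real.exp_sum, lin, Finset.mul_sum]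
  simp_rw [h1]
  rw [prod_sum_bool (fun i b => Real.exp (r * (a i * sgn1 b)))]
  calc ∏ i, (Real.exp (r * (a i * sgn1 true)) + Real.exp (r * (a i * sgn1 false)))
      ≤ ∏ i, (2 * Real.exp ((r * a i) ^ 2 / 2)) := by
        refine Finset.prod_le_prod (fun i _ => by positivity) (fun i _ => ?_)
        have := Real.cosh_le_exp_half_sq (r * a i)
        rw [Real.cosh_eq] at this
        simp only [sgn1, if_true, mul_one]
        simp only [Bool.false_eq_true, if_false]
        rw [show r * (a i * -1) = -(r * a i) by ring]
        linarith
    _ = Real.exp (r ^ 2 / 2) * 2 ^ n := by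
        rw [Finset.prod_mul_distrib, ← Real.exp_sum]
        simp only [Finset.prod_const, Finset.card_univ, Fintype.card_fin]
        rw [mul_comm]
        congr 2
        rw [← Finset.sum_div]
        simp_rw [mul_pow]
        rw [← Finset.mul_sum, ha, mul_one]

lemma chernoff {n : ℕ} (a : Fin n → ℝ) (ha : ∑ i, (a i) ^ 2 = 1) (r : ℝ) (hr : 0 ≤ r) :
    cubePr n (fun x => r < lin n a x) ≤ Real.exp (-(r ^ 2 / 2)) := by
  have h1 : cubePr n (fun x => r < lin n a x) ≤
      Real.exp (-r ^ 2) * cubeE n (fun x => Real.exp (r * lin n a x)) := by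
    rw [cubePr_eq, ← cubeE_smul]
    refine cubeE_mono fun x => ?_
    rw [← Real.exp_add]
    split_ifs with h
    · apply Real.one_le_exp
      nlinarith
    · positivity
  calc _ ≤ _ := h1
    _ ≤ Real.exp (-r ^ 2) * Real.exp (r ^ 2 / 2) := by gcongr; exact mgf_le a ha r
    _ = _ := by rw [← Real.exp_add]; congr 1; ring

/-! ### Functional inequality for functions of small support -/

lemma two_point (A B p q : ℝ) (hA : 0 ≤ A) (hB : 0 ≤ B) (hp : 0 < p) (hq : 0 < q) :
    A ^ 2 * (Real.log 2 + Real.log p - Real.log (p + q)) +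
      B ^ 2 * (Real.log 2 + Real.log q - Real.log (p + q)) ≤ 2 * (A - B) ^ 2 := by
  by_cases hAB : A ^ 2 + B ^ 2 = 0
  · have h1 : A = 0 := by nlinarith [sq_nonneg A, sq_nonneg B]
    have h2 : B = 0 := by nlinarith [sq_nonneg A, sq_nonneg B]
    simp [h1, h2]
  have hs : 0 < A ^ 2 + B ^ 2 := lt_of_le_of_ne (by positivity) (Ne.symm hAB)
  have key : ∀ C r : ℝ, 0 ≤ C → 0 < r →
      C ^ 2 * (Real.log 2 + Real.log r - Real.log (p + q)) ≤
        (A ^ 2 + B ^ 2) * (r / (p + q)) - C ^ 2 + C ^ 2 * (2 * C ^ 2 / (A ^ 2 + B ^ 2) - 1) := by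
    intro C r hC hr
    rcases hC.eq_or_lt with h0 | h0
    · rw [← h0]
      have : 0 ≤ (A ^ 2 + B ^ 2) * (r / (p + q)) := by positivity
      simpa using this
    have e1 : Real.log ((2 * r / (p + q)) * ((A ^ 2 + B ^ 2) / (2 * C ^ 2))) =
        Real.log 2 + Real.log r - Real.log (p + q) - Real.log (2 * C ^ 2 / (A ^ 2 + B ^ 2)) := by
      rw [Real.log_mul (by positivity) (by positivity), Real.log_div (by positivity) (by positivity),
        Real.log_mul (by positivity) (by positivity), Real.log_div (by positivity) (by positivity),
        Real.log_div (by positivity) (by positivity)]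
      ring
    have e2 := Real.log_le_sub_one_of_pos
      (show 0 < (2 * r / (p + q)) * ((A ^ 2 + B ^ 2) / (2 * C ^ 2)) by positivity)
    have e3 := Real.log_le_sub_one_of_pos (show 0 < 2 * C ^ 2 / (A ^ 2 + B ^ 2) by positivity)
    have e4 : Real.log 2 + Real.log r - Real.log (p + q) ≤
        (2 * r / (p + q)) * ((A ^ 2 + B ^ 2) / (2 * C ^ 2)) - 1 +
          (2 * C ^ 2 / (A ^ 2 + B ^ 2) - 1) := by linarith
    calc _ ≤ C ^ 2 * ((2 * r / (p + q)) * ((A ^ 2 + B ^ 2) / (2 * C ^ 2)) - 1 +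
          (2 * C ^ 2 / (A ^ 2 + B ^ 2) - 1)) := by gcongr
      _ = _ := by field_simp
  have k1 := key A p hA hp
  have k2 := key B q hB hq
  have k3 : (A ^ 2 + B ^ 2) * (p / (p + q)) + (A ^ 2 + B ^ 2) * (q / (p + q)) = A ^ 2 + B ^ 2 := by
    field_simp
  have k4 : A ^ 2 * (2 * A ^ 2 / (A ^ 2 + B ^ 2) - 1) + B ^ 2 * (2 * B ^ 2 / (A ^ 2 + B ^ 2) - 1)
      = (A - B) ^ 2 * ((A + B) ^ 2 / (A ^ 2 + B ^ 2)) := by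
    field_simp
    ring
  have k5 : (A + B) ^ 2 / (A ^ 2 + B ^ 2) ≤ 2 := by
    rw [div_le_iff₀ hs]; nlinarith [sq_nonneg (A - B)]
  have k6 : (A - B) ^ 2 * ((A + B) ^ 2 / (A ^ 2 + B ^ 2)) ≤ (A - B) ^ 2 * 2 := by gcongr
  linarith

lemma sum_cons {n : ℕ} (F : (Fin (n + 1) → Bool) → ℝ) :
    ∑ x, F x = ∑ z : Fin n → Bool, F (Fin.cons true z) + ∑ z : Fin n → Bool, F (Fin.cons false z) := by
  rw [← (Fin.consEquiv (fun _ : Fin (n + 1) => Bool)).sum_comp, Fintype.sum_prod_type,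
    Fintype.sum_bool]
  rfl

lemma fl_cons_zero {n : ℕ} (b : Bool) (z : Fin n → Bool) :
    fl (Fin.cons b z : Fin (n + 1) → Bool) 0 = Fin.cons (!b) z := by
  simp [fl, Fin.update_cons_zero]

lemma fl_cons_succ {n : ℕ} (b : Bool) (z : Fin n → Bool) (i : Fin n) :
    fl (Fin.cons b z : Fin (n + 1) → Bool) i.succ = Fin.cons b (fl z i) := by
  simp [fl, Fin.cons_update]

lemma cs_diff {ι : Type*} [Fintype ι] (f g : ι → ℝ) :
    (Real.sqrt (∑ z, f z ^ 2) - Real.sqrt (∑ z, g z ^ 2)) ^ 2 ≤ ∑ z, (f z - g z) ^ 2 := by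
  have h := Real.sum_mul_le_sqrt_mul_sqrt univ f g
  have h1 := Real.sq_sqrt (show 0 ≤ ∑ z, f z ^ 2 by positivity)
  have h2 := Real.sq_sqrt (show 0 ≤ ∑ z, g z ^ 2 by positivity)
  have h3 : ∑ z, (f z - g z) ^ 2 = ∑ z, f z ^ 2 + ∑ z, g z ^ 2 - 2 * ∑ z, f z * g z := by
    rw [Finset.mul_sum, ← Finset.sum_add_distrib, ← Finset.sum_sub_distrib]
    exact Finset.sum_congr rfl fun z _ => by ring
  rw [h3]
  nlinarith

lemma card_zero_imp {n : ℕ} (f : (Fin n → Bool) → ℝ)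
    (h : (∑ x, if f x ≠ 0 then (1 : ℝ) else 0) = 0) : ∑ x, f x ^ 2 = 0 := by
  refine Finset.sum_eq_zero fun x _ => ?_
  have := (Finset.sum_eq_zero_iff_of_nonneg (fun x _ => by split_ifs <;> norm_num)).1 h x (mem_univ x)
  by_contra hc
  have hf : f x ≠ 0 := fun h0 => hc (by simp [h0])
  simp [hf] at this

lemma logsob (n : ℕ) (f : (Fin n → Bool) → ℝ) :
    (∑ x, f x ^ 2) * (n * Real.log 2 - Real.log (∑ x, if f x ≠ 0 then (1 : ℝ) else 0)) ≤
      ∑ x, ∑ i, (f x - f (fl x i)) ^ 2 := by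
  induction n with
  | zero =>
    simp only [Finset.univ_eq_empty, Finset.sum_empty, Finset.sum_const_zero]
    simp only [Fintype.sum_unique]
    split_ifs <;> simp
  | succ n ih =>
    set f0 : (Fin n → Bool) → ℝ := fun z => f (Fin.cons true z) with hf0
    set f1 : (Fin n → Bool) → ℝ := fun z => f (Fin.cons false z) with hf1
    have i0 := ih f0
    have i1 := ih f1
    have hE : ∑ x, ∑ i, (f x - f (fl x i)) ^ 2 =
        ∑ x, ∑ i, (f0 x - f0 (fl x i)) ^ 2 + ∑ x, ∑ i, (f1 x - f1 (fl x i)) ^ 2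
          + 2 * ∑ z, (f0 z - f1 z) ^ 2 := by
      rw [sum_cons]
      simp only [Fin.sum_univ_succ, fl_cons_zero, fl_cons_succ, Finset.sum_add_distrib]
      have : ∑ z : Fin n → Bool, (f (Fin.cons false z) - f (Fin.cons (!false) z)) ^ 2
          = ∑ z, (f0 z - f1 z) ^ 2 :=
        Finset.sum_congr rfl fun z _ => by simp only [hf0, hf1, Bool.not_false]; ring
      rw [this]
      simp only [Bool.not_true]
      simp only [hf0, hf1]
      ring
    rw [hE, sum_cons, sum_cons (fun x => if f x ≠ 0 then (1 : ℝ) else 0)]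
    change (∑ z, f0 z ^ 2 + ∑ z, f1 z ^ 2) * (((n + 1 : ℕ) : ℝ) * Real.log 2 -
      Real.log ((∑ z, if f0 z ≠ 0 then (1 : ℝ) else 0) + (∑ z, if f1 z ≠ 0 then (1 : ℝ) else 0))) ≤ _
    have hcs := cs_diff f0 f1
    have hA := Real.sq_sqrt (show 0 ≤ ∑ z, f0 z ^ 2 by positivity)
    have hB := Real.sq_sqrt (show 0 ≤ ∑ z, f1 z ^ 2 by positivity)
    have hA0 := Real.sqrt_nonneg (∑ z, f0 z ^ 2)
    have hB0 := Real.sqrt_nonneg (∑ z, f1 z ^ 2)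
    have hk0 : 0 ≤ ∑ z, if f0 z ≠ 0 then (1 : ℝ) else 0 :=
      Finset.sum_nonneg fun z _ => by split_ifs <;> norm_num
    have hk1 : 0 ≤ ∑ z, if f1 z ≠ 0 then (1 : ℝ) else 0 :=
      Finset.sum_nonneg fun z _ => by split_ifs <;> norm_num
    have hz0 := card_zero_imp f0
    have hz1 := card_zero_imp f1
    generalize (∑ z, if f0 z ≠ 0 then (1 : ℝ) else 0) = p at *
    generalize (∑ z, if f1 z ≠ 0 then (1 : ℝ) else 0) = q at *
    generalize Real.sqrt (∑ z, f0 z ^ 2) = A at *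
    generalize Real.sqrt (∑ z, f1 z ^ 2) = B at *
    rw [← hA] at i0 hz0 ⊢
    rw [← hB] at i1 hz1 ⊢
    have hl2 : Real.log 2 ≤ 2 := by have := Real.log_two_lt_d9; linarith
    push_cast
    rcases hk0.eq_or_lt with h0 | h0
    · have hA' := hz0 h0.symm
      have hA'' : A = 0 := by simpa using hA'
      subst hA''
      rw [← h0] at i0 ⊢
      simp only [zero_add, zero_sub] at *
      nlinarith [sq_nonneg B]
    rcases hk1.eq_or_lt with h1 | h1
    · have hB' := hz1 h1.symm
      have hB'' : B = 0 := by simpa using hB'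
      subst hB''
      rw [← h1] at i1 ⊢
      simp only [add_zero, sub_zero] at *
      nlinarith [sq_nonneg A]
    have := two_point A B p q hA0 hB0 h0 h1
    nlinarith

end LFS

namespace LFS

/-- Truncated ramp. -/
def ramp (A w s : ℝ) : ℝ := max 0 (min w (s - A))

lemma ramp_lip (A w s r : ℝ) : |ramp A w s - ramp A w r| ≤ |s - r| := by
  unfold ramp
  refine (abs_max_sub_max_le_max _ _ _ _).trans ?_
  refine max_le (by simp) ?_
  refine (abs_min_sub_min_le_max _ _ _ _).trans ?_
  refine max_le (by simp) ?_
  apply le_of_eq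
  congr 1
  ring

lemma ramp_eq_zero {A w s : ℝ} (h : s ≤ A) : ramp A w s = 0 := by
  unfold ramp
  exact max_eq_left ((min_le_right _ _).trans (by linarith))

lemma decay {n : ℕ} (a : Fin n → ℝ) (ha : ∑ i, (a i) ^ 2 = 1) (t δ : ℝ) (hδ : 0 < δ)
    (hT : 0 < cubePr n (fun x => t < lin n a x)) :
    cubePr n (fun x => t + δ < lin n a x) * Real.log (1 / cubePr n (fun x => t < lin n a x)) ≤
      8 / δ ^ 2 * cubePr n (fun x => t < lin n a x) := by
  set f : (Fin n → Bool) → ℝ := fun x => ramp t δ (lin n a x) with hf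
  have hls := logsob n f
  have h2n : (0 : ℝ) < 2 ^ n := by positivity
  have hsupp : (∑ x, if f x ≠ 0 then (1 : ℝ) else 0) ≤
      2 ^ n * cubePr n (fun x => t < lin n a x) := by
    rw [cubePr_eq, cubeE, mul_div_cancel₀ _ h2n.ne']
    refine Finset.sum_le_sum fun x _ => ?_
    by_cases h : t < lin n a x
    · simp only [h, if_true]; split_ifs <;> norm_num
    · simp [hf, ramp_eq_zero (not_lt.1 h), h]
  have hN : δ ^ 2 * (2 ^ n * cubePr n (fun x => t + δ < lin n a x)) ≤ ∑ x, f x ^ 2 := by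
    rw [cubePr_eq, cubeE, mul_div_cancel₀ _ h2n.ne', Finset.mul_sum]
    refine Finset.sum_le_sum fun x _ => ?_
    split_ifs with h
    · have : f x = δ := by
        simp only [hf, ramp]
        rw [min_eq_left (by linarith), max_eq_right hδ.le]
      rw [this]; linarith
    · rw [mul_zero]; positivity
  have hE : ∑ x, ∑ i, (f x - f (fl x i)) ^ 2 ≤
      8 * (2 ^ n * cubePr n (fun x => t < lin n a x)) := by
    rw [Finset.sum_comm]
    have : ∀ i, ∑ x, (f x - f (fl x i)) ^ 2 ≤
        (a i) ^ 2 * (8 * (2 ^ n * cubePr n (fun x => t < lin n a x))) := by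
      intro i
      have e : ∀ x, (f x - f (fl x i)) ^ 2 ≤ 4 * (a i) ^ 2 *
          ((if t < lin n a x then (1 : ℝ) else 0) + (if t < lin n a (fl x i) then (1 : ℝ) else 0)) := by
        intro x
        by_cases h : t < lin n a x ∨ t < lin n a (fl x i)
        · have h1 : (1 : ℝ) ≤ (if t < lin n a x then (1 : ℝ) else 0) +
              (if t < lin n a (fl x i) then (1 : ℝ) else 0) := by
            split_ifs <;> simp_all
          have h2 : (f x - f (fl x i)) ^ 2 ≤ 4 * (a i) ^ 2 := by
            have := ramp_lip t δ (lin n a x) (lin n a (fl x i))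
            have := sq_le_sq.2 this
            refine this.trans ?_
            rw [lin_fl]
            have := sgn1_sq (x i)
            nlinarith
          have h3 : 0 ≤ 4 * (a i) ^ 2 := by positivity
          nlinarith
        · push Not at h
          have h1 : f x = 0 := ramp_eq_zero h.1
          have h2 : f (fl x i) = 0 := ramp_eq_zero h.2
          rw [h1, h2]
          simp [not_lt.2 h.1, not_lt.2 h.2]
      refine (Finset.sum_le_sum fun x _ => e x).trans ?_
      rw [← Finset.mul_sum, Finset.sum_add_distrib,
        sum_fl (fun x => if t < lin n a x then (1 : ℝ) else 0) i, cubePr_eq, cubeE,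
        mul_div_cancel₀ _ h2n.ne']
      apply le_of_eq; ring
    refine (Finset.sum_le_sum fun i _ => this i).trans ?_
    rw [← Finset.sum_mul, ha, one_mul]
  set T := cubePr n (fun x => t < lin n a x) with hTdef
  set T' := cubePr n (fun x => t + δ < lin n a x) with hTdef'
  have hT' : 0 ≤ T' := cubePr_nonneg _ _
  have hT1 : T ≤ 1 := cubePr_le_one _ _
  have hlogT : 0 ≤ Real.log (1 / T) := Real.log_nonneg (by rw [le_div_iff₀ hT]; linarith)
  have hN0 : 0 ≤ ∑ x, f x ^ 2 := by positivity
  have hk0 : 0 ≤ (∑ x, if f x ≠ 0 then (1 : ℝ) else 0) :=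
    Finset.sum_nonneg fun z _ => by split_ifs <;> norm_num
  have main : (∑ x, f x ^ 2) * Real.log (1 / T) ≤ 8 * (2 ^ n * T) := by
    rcases hk0.eq_or_lt with h0 | h0
    · rw [card_zero_imp f h0.symm]
      simp; positivity
    · refine le_trans ?_ (hls.trans hE)
      refine mul_le_mul_of_nonneg_left ?_ hN0
      have := Real.log_le_log h0 hsupp
      rw [Real.log_mul h2n.ne' hT.ne', Real.log_pow] at this
      rw [Real.log_div one_ne_zero hT.ne', Real.log_one]
      linarith
  have h3 := mul_le_mul_of_nonneg_right hN hlogT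
  have h4 : 2 ^ n * (δ ^ 2 * (T' * Real.log (1 / T))) ≤ 2 ^ n * (8 * T) := by linarith
  have h5 := le_of_mul_le_mul_left h4 h2n
  rw [div_mul_eq_mul_div, le_div_iff₀ (by positivity)]
  linarith

/-! ### Reflection -/

/-- Partial sums. -/
def psum {n : ℕ} (b : Fin n → ℝ) (x : Fin n → Bool) (k : ℕ) : ℝ :=
  ∑ i : Fin n, if (i : ℕ) < k then b i * sgn1 (x i) else 0

/-- Flip a prefix. -/
def pfl {n : ℕ} (x : Fin n → Bool) (k : ℕ) : Fin n → Bool :=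
  fun i => if (i : ℕ) < k then !x i else x i

lemma pfl_pfl {n : ℕ} (x : Fin n → Bool) (k : ℕ) : pfl (pfl x k) k = x := by
  ext i; simp only [pfl]; split_ifs <;> simp

lemma psum_pfl {n : ℕ} (b : Fin n → ℝ) (x : Fin n → Bool) {j k : ℕ} (h : j ≤ k) :
    psum b (pfl x k) j = - psum b x j := by
  unfold psum
  rw [← Finset.sum_neg_distrib]
  refine Finset.sum_congr rfl fun i _ => ?_
  by_cases hi : (i : ℕ) < j
  · simp [hi, pfl, lt_of_lt_of_le hi h, sgn1_not]
  · simp [hi]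

lemma psum_n {n : ℕ} (b : Fin n → ℝ) (x : Fin n → Bool) : psum b x n = lin n b x := by
  simp [psum, lin]

lemma lin_pfl {n : ℕ} (b : Fin n → ℝ) (x : Fin n → Bool) (k : ℕ) :
    lin n b (pfl x k) = lin n b x - 2 * psum b x k := by
  unfold psum lin
  rw [Finset.mul_sum, ← Finset.sum_sub_distrib]
  refine Finset.sum_congr rfl fun i _ => ?_
  by_cases hi : (i : ℕ) < k
  · simp [hi, pfl, sgn1_not]; ring
  · simp [hi, pfl]

lemma psum_succ_le {n : ℕ} (b : Fin n → ℝ) (m : ℝ) (hm0 : 0 ≤ m) (hb : ∀ i, |b i| ≤ m)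
    (x : Fin n → Bool) (k : ℕ) : psum b x (k + 1) ≤ psum b x k + m := by
  have : psum b x (k + 1) - psum b x k ≤ m := by
    unfold psum
    rw [← Finset.sum_sub_distrib]
    by_cases hk : k < n
    · rw [Finset.sum_eq_single (⟨k, hk⟩ : Fin n)]
      · simp only [Nat.lt_succ_self, if_true, lt_irrefl, if_false, sub_zero]
        refine (le_abs_self _).trans ?_
        rw [abs_mul, abs_sgn1, mul_one]; exact hb _
      · intro i _ hi
        have hne : (i : ℕ) ≠ k := fun h => hi (Fin.ext h)
        by_cases h1 : (i : ℕ) < k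
        · simp [h1, Nat.lt_succ_of_lt h1]
        · have : ¬ (i : ℕ) < k + 1 := by omega
          simp [h1, this]
      · simp
    · rw [Finset.sum_eq_zero]
      · exact hm0
      · intro i _
        have h1 : (i : ℕ) < k := by have := i.2; omega
        simp [h1, Nat.lt_succ_of_lt h1]
  linarith

lemma psum_zero {n : ℕ} (b : Fin n → ℝ) (x : Fin n → Bool) : psum b x 0 = 0 := by
  simp [psum]

/-- First time the partial sum reaches `θ` (junk 0 if never). -/
def ftime {n : ℕ} (b : Fin n → ℝ) (θ : ℝ) (x : Fin n → Bool) : ℕ :=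
  sInf {k : ℕ | θ ≤ psum b x k}

lemma ftime_spec {n : ℕ} (b : Fin n → ℝ) (θ : ℝ) (x : Fin n → Bool) (h : θ ≤ lin n b x) :
    θ ≤ psum b x (ftime b θ x) :=
  Nat.sInf_mem (s := {k : ℕ | θ ≤ psum b x k}) ⟨n, by simpa [psum_n] using h⟩

lemma ftime_lt {n : ℕ} (b : Fin n → ℝ) (θ : ℝ) (x : Fin n → Bool) {k : ℕ}
    (h : k < ftime b θ x) : psum b x k < θ := by
  have := Nat.notMem_of_lt_sInf h
  simpa using this

lemma reflect_inj {n : ℕ} (b : Fin n → ℝ) (θ : ℝ) {x y : Fin n → Bool}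
    (hx : θ ≤ lin n b x) (hy : θ ≤ lin n b y)
    (h : pfl x (ftime b θ x) = pfl y (ftime b θ y)) : x = y := by
  have key : ∀ x y : Fin n → Bool, θ ≤ lin n b y →
      pfl x (ftime b θ x) = pfl y (ftime b θ y) → ¬ ftime b θ y < ftime b θ x := by
    intro x y hy h hlt
    have h1 := ftime_lt b θ x hlt
    have h2 := ftime_spec b θ y hy
    have h3 := psum_pfl b x hlt.le
    have h4 := psum_pfl b y (le_refl (ftime b θ y))
    rw [h] at h3
    linarith
  have e : ftime b θ x = ftime b θ y :=
    le_antisymm (not_lt.1 (key x y hy h)) (not_lt.1 (key y x hx h.symm))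
  rw [e] at h
  have := congrArg (fun z => pfl z (ftime b θ y)) h
  simpa [pfl_pfl] using this

lemma reflect {n : ℕ} (b : Fin n → ℝ) (m : ℝ) (hm : 0 < m) (hb : ∀ i, |b i| ≤ m) (u v : ℝ)
    (hu : 0 ≤ u) (huv : u ≤ v) :
    cubePr n (fun x => lin n b x ∈ Set.Ioc v (v + 2 * m)) ≤
      cubePr n (fun x => lin n b x ∈ Set.Ioc (u - 2 * m) (u + 2 * m)) := by
  set θ := (v - u) / 2 with hθ
  unfold cubePr
  refine div_le_div_of_nonneg_right (Nat.cast_le.2 ?_) (by positivity)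
  refine Finset.card_le_card_of_injOn (fun x => pfl x (ftime b θ x)) ?_ ?_
  · intro x hx
    simp only [Finset.coe_filter, Finset.mem_univ, true_and, Set.mem_setOf_eq, Set.mem_Ioc] at hx ⊢
    have hx' : θ ≤ lin n b x := by linarith
    have h1 := ftime_spec b θ x hx'
    have h2 : psum b x (ftime b θ x) ≤ θ + m := by
      rcases Nat.eq_zero_or_pos (ftime b θ x) with h0 | h0
      · rw [h0, psum_zero]; linarith
      · obtain ⟨k, hk⟩ := Nat.exists_eq_succ_of_ne_zero h0.ne'
        have h3 := ftime_lt b θ x (k := k) (by omega)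
        have h4 := psum_succ_le b m hm.le hb x k
        rw [hk]
        simp only [Nat.succ_eq_add_one]
        linarith
    rw [lin_pfl]
    constructor <;> linarith
  · intro x hx y hy h
    simp only [Finset.coe_filter, Finset.mem_univ, true_and, Set.mem_setOf_eq, Set.mem_Ioc] at hx hy
    exact reflect_inj b θ (by linarith) (by linarith) h

lemma lin_update {n : ℕ} (a : Fin n → ℝ) (i : Fin n) (x : Fin n → Bool) :
    lin n a x = lin n (Function.update a i 0) x + a i * sgn1 (x i) := by
  have h : lin n a x - lin n (Function.update a i 0) x = a i * sgn1 (x i) := by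
    unfold lin
    rw [← Finset.sum_sub_distrib, Finset.sum_eq_single i]
    · simp
    · intro j _ hj
      simp [hj]
    · simp
  linarith

lemma quasi {n : ℕ} (a : Fin n → ℝ) (m : ℝ) (hm : 0 < m) (hb : ∀ i, |a i| ≤ m) (i : Fin n)
    (hi : |a i| = m) (t s : ℝ) (ht : -m ≤ t) (hs : t + 2 * m ≤ s) :
    cubePr n (fun x => lin n a x ∈ Set.Ioc s (s + 2 * m)) ≤
      2 * cubePr n (fun x => lin n a x ∈ Set.Ioc t (t + 2 * m)) := by
  set b := Function.update a i 0 with hbdef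
  have hbb : ∀ j, |b j| ≤ m := by
    intro j
    by_cases h : j = i
    · subst h; simp [hbdef, hm.le]
    · simpa [hbdef, h] using hb j
  have hval : ∀ x, (lin n a x = lin n b x + m ∧ lin n a (fl x i) = lin n b x - m) ∨
      (lin n a x = lin n b x - m ∧ lin n a (fl x i) = lin n b x + m) := by
    intro x
    have e1 := lin_update a i x
    have e2 := lin_fl a x i
    have : |a i * sgn1 (x i)| = m := by rw [abs_mul, abs_sgn1, hi, mul_one]
    rcases abs_eq hm.le |>.1 this with h | h
    · left; constructor <;> linarith
    · right; constructor <;> linarith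
  have dbl : ∀ r, 2 * cubePr n (fun x => lin n a x ∈ Set.Ioc r (r + 2 * m)) =
      cubePr n (fun x => lin n b x ∈ Set.Ioc (r - m) (r + m)) +
        cubePr n (fun x => lin n b x ∈ Set.Ioc (r + m) (r + 3 * m)) := by
    intro r
    rw [two_mul]
    nth_rw 2 [cubePr_eq]
    rw [← cubeE_fl _ i, cubePr_eq, cubePr_eq, cubePr_eq, ← cubeE_add, ← cubeE_add]
    congr 1
    ext x
    simp only [Set.mem_Ioc]
    rcases hval x with ⟨h1, h2⟩ | ⟨h1, h2⟩ <;> rw [h1, h2]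
    · congr 1 <;> (refine if_congr ?_ rfl rfl; constructor <;> rintro ⟨_, _⟩ <;> constructor <;> linarith)
    · rw [add_comm]
      congr 1 <;> (refine if_congr ?_ rfl rfl; constructor <;> rintro ⟨_, _⟩ <;> constructor <;> linarith)
  have d1 := dbl s
  have d2 := dbl t
  have r1 := reflect b m hm hbb (t + m) (s - m) (by linarith) (by linarith)
  have r2 := reflect b m hm hbb (t + m) (s + m) (by linarith) (by linarith)
  rw [show s - m + 2 * m = s + m by ring] at r1
  rw [show s + m + 2 * m = s + 3 * m by ring] at r2
  have hu : cubePr n (fun x => lin n b x ∈ Set.Ioc (t + m - 2 * m) (t + m + 2 * m)) =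
      cubePr n (fun x => lin n b x ∈ Set.Ioc (t - m) (t + m)) +
        cubePr n (fun x => lin n b x ∈ Set.Ioc (t + m) (t + 3 * m)) := by
    refine cubePr_add_disj ?_ ?_
    · intro x
      simp only [Set.mem_Ioc]
      constructor
      · rintro ⟨h1, h2⟩
        rcases le_or_gt (lin n b x) (t + m) with h | h
        · left; constructor <;> linarith
        · right; constructor <;> linarith
      · rintro (⟨h1, h2⟩ | ⟨h1, h2⟩) <;> constructor <;> linarith
    · intro x h1 h2
      simp only [Set.mem_Ioc] at h1 h2
      linarith [h1.2, h2.1]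
  linarith

lemma pr_split {n : ℕ} (a : Fin n → ℝ) (r s : ℝ) (h : r ≤ s) :
    cubePr n (fun x => r < lin n a x) = cubePr n (fun x => lin n a x ∈ Set.Ioc r s) +
      cubePr n (fun x => s < lin n a x) := by
  refine cubePr_add_disj ?_ ?_
  · intro x
    simp only [Set.mem_Ioc]
    constructor
    · intro h1
      rcases le_or_gt (lin n a x) s with h | h
      · left; constructor <;> linarith
      · right; linarith
    · rintro (⟨h1, h2⟩ | h1) <;> linarith
  · intro x h1 h2
    simp only [Set.mem_Ioc] at h1
    linarith [h1.2]

lemma pr_chain {n : ℕ} (a : Fin n → ℝ) (r w : ℝ) (hw : 0 ≤ w) (N : ℕ) :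
    cubePr n (fun x => r < lin n a x) =
      ∑ j ∈ Finset.range N, cubePr n (fun x => lin n a x ∈ Set.Ioc (r + j * w) (r + j * w + w)) +
      cubePr n (fun x => r + N * w < lin n a x) := by
  induction N with
  | zero => simp
  | succ N ih =>
    rw [Finset.sum_range_succ, ih, pr_split a (r + N * w) (r + N * w + w) (by linarith)]
    push_cast
    rw [show r + N * w + w = r + (N + 1) * w by ring]
    ring

lemma lower_core {n : ℕ} (a : Fin n → ℝ) (m' m : ℝ) (hm' : 0 < m') (hb : ∀ i, |a i| ≤ m')
    (i : Fin n) (hi : |a i| = m') (hmm : m' ≤ m) (t δ : ℝ) (ht : -m' ≤ t) (hδ : 0 < δ)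
    (hdec : cubePr n (fun x => t + δ < lin n a x) ≤ cubePr n (fun x => t < lin n a x) / 2) :
    cubePr n (fun x => t < lin n a x) ≤
      4 * (δ / m + 1) * cubePr n (fun x => lin n a x ∈ Set.Ioc t (t + 2 * m)) := by
  have hm : 0 < m := by linarith
  set k := ⌊m / m'⌋₊ with hk
  have hk1 : 1 ≤ k := by
    rw [hk, Nat.one_le_floor_iff, le_div_iff₀ hm']; linarith
  have hkle : (k : ℝ) * m' ≤ m := by
    have := Nat.floor_le (show 0 ≤ m / m' by positivity)
    rwa [← hk, le_div_iff₀ hm'] at this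
  have hkge : m ≤ 2 * ((k : ℝ) * m') := by
    have := Nat.lt_floor_add_one (m / m')
    rw [← hk, div_lt_iff₀ hm'] at this
    have h1 : (1 : ℝ) ≤ k := by exact_mod_cast hk1
    nlinarith
  set N := ⌈δ / m⌉₊ with hN
  have hN1 : δ ≤ N * m := by
    have := Nat.le_ceil (δ / m)
    rwa [← hN, div_le_iff₀ hm] at this
  have hN2 : (N : ℝ) ≤ δ / m + 1 := (Nat.ceil_lt_add_one (by positivity)).le
  -- block of `k` small intervals
  have hblock : ∀ r, cubePr n (fun x => lin n a x ∈ Set.Ioc r (r + k * (2 * m'))) =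
      ∑ j ∈ Finset.range k,
        cubePr n (fun x => lin n a x ∈ Set.Ioc (r + j * (2 * m')) (r + j * (2 * m') + 2 * m')) := by
    intro r
    have h1 := pr_chain a r (2 * m') (by linarith) k
    have h2 := pr_split a r (r + k * (2 * m')) (by have : 0 ≤ (k : ℝ) * (2 * m') := by positivity
                                                   linarith)
    linarith
  set B := cubePr n (fun x => lin n a x ∈ Set.Ioc t (t + k * (2 * m'))) with hB
  have hB0 : 0 ≤ B := cubePr_nonneg _ _
  have hblk : ∀ j : ℕ, cubePr n (fun x => lin n a x ∈
      Set.Ioc (t + j * (k * (2 * m'))) (t + j * (k * (2 * m')) + k * (2 * m'))) ≤ 2 * B := by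
    intro j
    rcases Nat.eq_zero_or_pos j with h0 | h0
    · subst h0
      simp only [Nat.cast_zero, zero_mul, add_zero]
      linarith
    · rw [hB, hblock, hblock, Finset.mul_sum]
      refine Finset.sum_le_sum fun l _ => ?_
      apply quasi a m' hm' hb i hi
      · have : 0 ≤ (l : ℝ) * (2 * m') := by positivity
        linarith
      · have h1 : (1 : ℝ) ≤ k := by exact_mod_cast hk1
        have h2 : (1 : ℝ) ≤ j := by exact_mod_cast h0
        have h3 : (1 : ℝ) ≤ j * k := by nlinarith
        nlinarith
  have hchain := pr_chain a t (k * (2 * m')) (by positivity) N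
  have hsum := Finset.sum_le_sum (s := Finset.range N) (fun j _ => hblk j)
  rw [Finset.sum_const, Finset.card_range, nsmul_eq_mul] at hsum
  have hlast : cubePr n (fun x => t + N * (k * (2 * m')) < lin n a x) ≤
      cubePr n (fun x => t + δ < lin n a x) := by
    refine cubePr_mono fun x hx => ?_
    have : (N : ℝ) * m ≤ N * (k * (2 * m')) := by
      gcongr; linarith
    linarith
  have hBQ : B ≤ cubePr n (fun x => lin n a x ∈ Set.Ioc t (t + 2 * m)) := by
    refine cubePr_mono fun x hx => ?_
    simp only [Set.mem_Ioc] at hx ⊢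
    exact ⟨hx.1, by linarith [hx.2]⟩
  have h1 : cubePr n (fun x => t < lin n a x) ≤ 4 * (N * B) := by linarith
  have h2 : (N : ℝ) * B ≤ (δ / m + 1) * cubePr n (fun x => lin n a x ∈ Set.Ioc t (t + 2 * m)) := by
    gcongr
  linarith

end LFS

namespace LFS

lemma cubeE_lin {n : ℕ} (a : Fin n → ℝ) (ψ : (Fin n → Bool) → ℝ) :
    2 * cubeE n (fun x => ψ x * lin n a x) =
      cubeE n (fun x => ∑ i, (ψ x - ψ (fl x i)) * (a i * sgn1 (x i))) := by
  rw [cubeE_sum]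
  have e1 : cubeE n (fun x => ψ x * lin n a x) =
      ∑ i, cubeE n (fun x => ψ x * (a i * sgn1 (x i))) := by
    rw [← cubeE_sum]
    congr 1
    ext x
    rw [lin, Finset.mul_sum]
  rw [e1, Finset.mul_sum]
  refine Finset.sum_congr rfl fun i _ => ?_
  have e2 : cubeE n (fun x => ψ x * (a i * sgn1 (x i))) =
      cubeE n (fun x => ψ (fl x i) * (a i * sgn1 (fl x i i))) :=
    (cubeE_fl (fun x => ψ x * (a i * sgn1 (x i))) i).symm
  rw [two_mul]
  nth_rw 2 [e2]
  rw [← cubeE_add]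
  congr 1
  ext x
  have : sgn1 (fl x i i) = - sgn1 (x i) := by simp [fl, sgn1_not]
  rw [this]
  ring

lemma ramp_mono (A w : ℝ) {r s : ℝ} (h : r ≤ s) : ramp A w r ≤ ramp A w s := by
  unfold ramp
  gcongr

lemma ramp_mid {A w s : ℝ} (h1 : A ≤ s) (h2 : s ≤ A + w) : ramp A w s = s - A := by
  unfold ramp
  rw [min_eq_right (by linarith), max_eq_right (by linarith)]

lemma upper1 {n : ℕ} (a : Fin n → ℝ) (ha : ∑ i, (a i) ^ 2 = 1) (m : ℝ) (hb : ∀ i, |a i| ≤ m)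
    (t : ℝ) :
    cubePr n (fun x => lin n a x ∈ Set.Ioc t (t + 2 * m)) ≤
      cubeE n (fun x => ramp (t - 2 * m) (6 * m) (lin n a x) * lin n a x) := by
  have h := cubeE_lin a (fun x => ramp (t - 2 * m) (6 * m) (lin n a x))
  have h2 : 2 * cubePr n (fun x => lin n a x ∈ Set.Ioc t (t + 2 * m)) ≤
      cubeE n (fun x => ∑ i, (ramp (t - 2 * m) (6 * m) (lin n a x) -
        ramp (t - 2 * m) (6 * m) (lin n a (fl x i))) * (a i * sgn1 (x i))) := by
    rw [cubePr_eq, ← cubeE_smul]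
    refine cubeE_mono fun x => ?_
    split_ifs with hx
    · simp only [Set.mem_Ioc] at hx
      rw [← ha, Finset.mul_sum]
      refine Finset.sum_le_sum fun i _ => ?_
      have hab : |a i * sgn1 (x i)| ≤ m := by rw [abs_mul, abs_sgn1, mul_one]; exact hb i
      have hab' := abs_le.1 hab
      have hsq := sgn1_sq (x i)
      rw [ramp_mid (by linarith) (by linarith), lin_fl,
        ramp_mid (by linarith) (by linarith)]
      apply le_of_eq
      calc 2 * a i ^ 2 = 2 * (a i ^ 2 * sgn1 (x i) ^ 2) := by rw [hsq]; ring
        _ = _ := by ring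
    · rw [mul_zero]
      refine Finset.sum_nonneg fun i _ => ?_
      rw [lin_fl]
      rcases le_total 0 (a i * sgn1 (x i)) with h0 | h0
      · refine mul_nonneg ?_ h0
        rw [sub_nonneg]
        exact ramp_mono _ _ (by linarith)
      · refine mul_nonneg_of_nonpos_of_nonpos ?_ h0
        rw [sub_nonpos]
        exact ramp_mono _ _ (by linarith)
  linarith

lemma upper2 {n : ℕ} (a : Fin n → ℝ) (ha : ∑ i, (a i) ^ 2 = 1) (A w ε : ℝ) (hw : 0 ≤ w)
    (hε : 0 < ε) (hε2 : ε ≤ 1 / 2) (hεT : ε ≤ cubePr n (fun x => A < lin n a x)) :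
    cubeE n (fun x => ramp A w (lin n a x) * lin n a x) ≤
      w * (4 * cubePr n (fun x => A < lin n a x) * Real.sqrt (Real.log (1 / ε))) := by
  set L := Real.log (1 / ε) with hL
  have hL2 : 0.69 ≤ L := by
    have h1 := Real.log_two_gt_d9
    have h2 : Real.log 2 ≤ L := by
      apply Real.log_le_log (by norm_num)
      rw [le_div_iff₀ hε]; linarith
    linarith
  have hεL : ε = Real.exp (-L) := by
    rw [hL, Real.log_div one_ne_zero hε.ne', Real.log_one, zero_sub, neg_neg, Real.exp_log hε]
  set q := Real.sqrt L with hq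
  have hq2 : q ^ 2 = L := Real.sq_sqrt (by linarith)
  have hq0 : 0 < q := Real.sqrt_pos.2 (by linarith)
  set T := cubePr n (fun x => A < lin n a x) with hT
  have h1 : cubeE n (fun x => ramp A w (lin n a x) * lin n a x) ≤
      w * (1 / q * (2 * L * T + ε ^ 2 * cubeE n (fun x => Real.exp (q * lin n a x)))) := by
    rw [hT, cubePr_eq, ← cubeE_smul, ← cubeE_smul, ← cubeE_add, ← cubeE_smul, ← cubeE_smul]
    refine cubeE_mono fun x => ?_
    have hexp := Real.exp_pos (q * lin n a x)
    by_cases hx : A < lin n a x ∧ 0 ≤ lin n a x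
    · have hr0 : 0 ≤ ramp A w (lin n a x) := le_max_left _ _
      have hr1 : ramp A w (lin n a x) ≤ w := max_le hw (min_le_left _ _)
      simp only [hx.1, if_true]
      have e1 : lin n a x ≤ 1 / q * (2 * L * 1 + ε ^ 2 * Real.exp (q * lin n a x)) := by
        rw [one_div_mul_eq_div, le_div_iff₀ hq0]
        have : ε ^ 2 * Real.exp (q * lin n a x) = Real.exp (q * lin n a x - 2 * L) := by
          rw [hεL, ← Real.exp_nat_mul, ← Real.exp_add]; congr 1; push_cast; ring
        rw [this]
        have := Real.add_one_le_exp (q * lin n a x - 2 * L)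
        linarith
      exact mul_le_mul hr1 e1 hx.2 hw
    · have hle : ramp A w (lin n a x) * lin n a x ≤ 0 := by
        by_cases hA : A < lin n a x
        · have : lin n a x ≤ 0 := by
            by_contra hc
            exact hx ⟨hA, by linarith⟩
          exact mul_nonpos_of_nonneg_of_nonpos (le_max_left _ _) this
        · rw [ramp_eq_zero (not_lt.1 hA), zero_mul]
      refine hle.trans ?_
      have : (0 : ℝ) ≤ if A < lin n a x then 1 else 0 := by split_ifs <;> norm_num
      positivity
  refine h1.trans ?_
  refine mul_le_mul_of_nonneg_left ?_ hw
  have h2 := mgf_le a ha q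
  have h3 : ε ^ 2 * cubeE n (fun x => Real.exp (q * lin n a x)) ≤ T := by
    calc _ ≤ ε ^ 2 * Real.exp (q ^ 2 / 2) := by gcongr
      _ ≤ ε ^ 2 * Real.exp L := by gcongr; rw [hq2]; linarith
      _ = ε := by
        rw [sq, mul_assoc]
        nth_rw 2 [hεL]
        rw [← Real.exp_add]; simp
      _ ≤ T := hεT
  have hT0 : 0 ≤ T := cubePr_nonneg _ _
  rw [one_div_mul_eq_div, div_le_iff₀ hq0]
  have h4 : 4 * T * q * q = 4 * T * L := by rw [← hq2]; ring
  rw [h4]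
  nlinarith

/-! ### Random flips -/

/-- Biased product weights. -/
def wt {n : ℕ} (p : ℝ) (η : Fin n → Bool) : ℝ := ∏ i, if η i then p else 1 - p

lemma wt_nonneg {n : ℕ} {p : ℝ} (h0 : 0 ≤ p) (h1 : p ≤ 1) (η : Fin n → Bool) : 0 ≤ wt p η :=
  Finset.prod_nonneg fun i _ => by split_ifs <;> linarith

lemma wt_mgf {n : ℕ} (p r : ℝ) (b : Fin n → ℝ) :
    ∑ η : Fin n → Bool, wt p η * Real.exp (r * ∑ i, if η i then b i else 0) =
      ∏ i, (1 + p * (Real.exp (r * b i) - 1)) := by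
  have h : ∀ η : Fin n → Bool, wt p η * Real.exp (r * ∑ i, if η i then b i else 0) =
      ∏ i, (if η i then p else 1 - p) * Real.exp (r * if η i then b i else 0) := by
    intro η
    rw [Finset.mul_sum, Real.exp_sum, wt, ← Finset.prod_mul_distrib]
  simp_rw [h]
  rw [prod_sum_bool (fun i e => (if e then p else 1 - p) * Real.exp (r * if e then b i else 0))]
  refine Finset.prod_congr rfl fun i _ => ?_
  simp
  ring

lemma wt_sum {n : ℕ} (p : ℝ) : ∑ η : Fin n → Bool, wt p η = 1 := by
  have := wt_mgf p 0 (fun _ : Fin n => 0)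
  simpa using this

/-- A constant. -/
def RR : ℝ := 2 * Real.exp 17

lemma scalar_low (p v : ℝ) (hp : 0 ≤ p) (hp1 : p ≤ 1 / 100) (hv : |v| ≤ 1) :
    Real.exp (p * v + p * v ^ 2 / 4 - 8 * p ^ 2 * v ^ 2) ≤ 1 + p * (Real.exp v - 1) := by
  obtain ⟨hv1, hv2⟩ := abs_le.1 hv
  have e1 : 1 + v + v ^ 2 / 4 ≤ Real.exp v := by
    have h1 := Real.add_one_le_exp (v / 2)
    have h2 : Real.exp v = Real.exp (v / 2) ^ 2 := by
      rw [← Real.exp_nat_mul]; congr 1; push_cast; ring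
    rw [h2]
    nlinarith
  set y := p * (v + v ^ 2 / 4) with hy
  have hz : |v + v ^ 2 / 4| ≤ 2 := by
    rw [abs_le]; constructor <;> nlinarith
  have hy1 : |y| ≤ 1 / 50 := by
    rw [hy, abs_mul, abs_of_nonneg hp]
    calc p * |v + v ^ 2 / 4| ≤ 1 / 100 * 2 := by gcongr
      _ = 1 / 50 := by norm_num
  obtain ⟨hya, hyb⟩ := abs_le.1 hy1
  have hy2 : y ^ 2 ≤ 4 * p ^ 2 * v ^ 2 := by
    have h1 : (1 + v / 4) ^ 2 ≤ 4 := by nlinarith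
    have h2 : y ^ 2 = p ^ 2 * v ^ 2 * (1 + v / 4) ^ 2 := by rw [hy]; ring
    rw [h2]
    have := mul_le_mul_of_nonneg_left h1 (show 0 ≤ p ^ 2 * v ^ 2 by positivity)
    linarith
  have hz1 : |y - 2 * y ^ 2| ≤ 1 := by
    rw [abs_le]; constructor <;> nlinarith
  have e2 := (abs_le.1 (Real.abs_exp_sub_one_sub_id_le hz1)).2
  calc _ ≤ Real.exp (y - 2 * y ^ 2) := by
        apply Real.exp_le_exp.2
        rw [hy] at hy2 ⊢
        linarith
    _ ≤ 1 + y := by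
        have : (y - 2 * y ^ 2) ^ 2 ≤ 2 * y ^ 2 := by
          have h1 : (1 - 2 * y) ^ 2 ≤ 2 := by nlinarith
          have := mul_le_mul_of_nonneg_left h1 (sq_nonneg y)
          nlinarith
        linarith
    _ ≤ _ := by
        have := mul_le_mul_of_nonneg_left e1 hp
        rw [hy]; linarith

lemma anticonc {n : ℕ} (b : Fin n → ℝ) (m l : ℝ) (hm : 0 < m) (hm1 : m ≤ 1 / 500)
    (hb : ∀ i, |b i| ≤ 2 * m) (hb2 : ∑ i, b i ^ 2 = 4) (hbl : ∑ i, b i = -2 * l)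
    (hl1 : m * l ≤ 1 / 500) (hl2 : -3 * m ≤ l) :
    1 ≤ RR ^ 2 * ∑ η : Fin n → Bool, wt (256 * m ^ 2) η *
      (if 2 * m < ∑ i, (if η i then b i else 0) then 1 else 0) := by
  set p := 256 * m ^ 2 with hp
  have hp0 : 0 ≤ p := by positivity
  have hp1 : p ≤ 1 / 800 := by rw [hp]; nlinarith
  set r := 1 / (16 * m) with hr
  have hrm : r * m = 1 / 16 := by rw [hr]; field_simp
  have hr0 : 0 < r := by positivity
  have hpr2 : p * r ^ 2 = 1 := by rw [hp, hr]; field_simp; norm_num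
  have hpr : p * r = 16 * m := by rw [hp, hr]; field_simp; norm_num
  have hv : ∀ i, |r * b i| ≤ 1 / 8 := by
    intro i
    rw [abs_mul, abs_of_pos hr0]
    calc r * |b i| ≤ r * (2 * m) := by gcongr; exact hb i
      _ = 1 / 8 := by linarith
  have hRR : 2 ≤ RR := by
    unfold RR
    have := Real.one_le_exp (show (0 : ℝ) ≤ 17 by norm_num)
    linarith
  -- lower bound on the first moment
  have hE1 : 3 / 2 ≤ Real.exp (-(1 / 8)) *
      ∑ η : Fin n → Bool, wt p η * Real.exp (r * ∑ i, if η i then b i else 0) := by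
    rw [wt_mgf]
    have h1 : Real.exp (∑ i, (p * (r * b i) + p * (r * b i) ^ 2 / 4 - 8 * p ^ 2 * (r * b i) ^ 2)) ≤
        ∏ i, (1 + p * (Real.exp (r * b i) - 1)) := by
      rw [Real.exp_sum]
      refine Finset.prod_le_prod (fun i _ => (Real.exp_pos _).le) (fun i _ => ?_)
      exact scalar_low p (r * b i) hp0 (by linarith) ((hv i).trans (by norm_num))
    have h2 : ∑ i, (p * (r * b i) + p * (r * b i) ^ 2 / 4 - 8 * p ^ 2 * (r * b i) ^ 2) =
        p * r * (∑ i, b i) + p * r ^ 2 * (∑ i, b i ^ 2) / 4 -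
          8 * p * (p * r ^ 2) * (∑ i, b i ^ 2) := by
      simp only [Finset.mul_sum, Finset.sum_div]
      rw [← Finset.sum_add_distrib, ← Finset.sum_sub_distrib]
      exact Finset.sum_congr rfl fun i _ => by ring
    rw [h2, hpr, hpr2, hbl, hb2] at h1
    calc (3 / 2 : ℝ) ≤ Real.exp (1 / 2) := by
          have := Real.add_one_le_exp (1 / 2 : ℝ); linarith
      _ ≤ Real.exp (-(1 / 8) + (16 * m * (-2 * l) + 1 * 4 / 4 - 8 * p * 1 * 4)) := by
          apply Real.exp_le_exp.2
          nlinarith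
      _ ≤ _ := by
          rw [Real.exp_add]
          gcongr
  have hE2 : Real.exp (-(1 / 4)) *
      ∑ η : Fin n → Bool, wt p η * Real.exp ((2 * r) * ∑ i, if η i then b i else 0) ≤
        Real.exp 17 := by
    rw [wt_mgf]
    have h1 : ∏ i, (1 + p * (Real.exp (2 * r * b i) - 1)) ≤
        Real.exp (∑ i, (p * (2 * (r * b i) + 4 * (r * b i) ^ 2))) := by
      rw [Real.exp_sum]
      refine Finset.prod_le_prod (fun i _ => ?_) (fun i _ => ?_)
      · have := Real.exp_pos (2 * r * b i)
        nlinarith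
      · have hv2 : |2 * r * b i| ≤ 1 := by
          have := hv i
          rw [mul_assoc, abs_mul, abs_of_pos (show (0 : ℝ) < 2 by norm_num)]
          linarith
        have e2 := (abs_le.1 (Real.abs_exp_sub_one_sub_id_le hv2)).2
        have e3 := mul_le_mul_of_nonneg_left e2 hp0
        have e4 := Real.add_one_le_exp (p * (2 * (r * b i) + 4 * (r * b i) ^ 2))
        nlinarith
    have h2 : ∑ i, (p * (2 * (r * b i) + 4 * (r * b i) ^ 2)) =
        2 * (p * r) * (∑ i, b i) + 4 * (p * r ^ 2) * (∑ i, b i ^ 2) := by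
      simp only [Finset.mul_sum]
      rw [← Finset.sum_add_distrib]
      exact Finset.sum_congr rfl fun i _ => by ring
    rw [h2, hpr, hpr2, hbl, hb2] at h1
    calc _ ≤ 1 * Real.exp (2 * (16 * m) * (-2 * l) + 4 * 1 * 4) := by
          refine mul_le_mul ?_ h1 ?_ zero_le_one
          · exact Real.exp_le_one_iff.2 (by norm_num)
          · refine Finset.prod_nonneg fun i _ => ?_
            have := Real.exp_pos (2 * r * b i)
            nlinarith
      _ ≤ Real.exp 17 := by
          rw [one_mul]
          apply Real.exp_le_exp.2
          nlinarith
  have hpt : ∀ z : ℝ, (RR + 1) * (Real.exp (-(1 / 8)) * Real.exp (r * z)) -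
      Real.exp (-(1 / 4)) * Real.exp (2 * r * z) - RR ≤
        RR ^ 2 * (if 2 * m < z then 1 else 0) := by
    intro z
    have e1 : Real.exp (-(1 / 8)) * Real.exp (r * z) = Real.exp (r * (z - 2 * m)) := by
      rw [← Real.exp_add]; congr 1; linarith
    have e2 : Real.exp (-(1 / 4)) * Real.exp (2 * r * z) = Real.exp (r * (z - 2 * m)) ^ 2 := by
      rw [← Real.exp_add, ← Real.exp_nat_mul]; congr 1; push_cast; linarith
    rw [e1, e2]
    have hw0 := Real.exp_pos (r * (z - 2 * m))
    split_ifs with h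
    · nlinarith [sq_nonneg (RR + 1 - 2 * Real.exp (r * (z - 2 * m)))]
    · have : Real.exp (r * (z - 2 * m)) ≤ 1 := by
        apply Real.exp_le_one_iff.2
        exact mul_nonpos_of_nonneg_of_nonpos hr0.le (by linarith)
      nlinarith
  have hsum : ∑ η : Fin n → Bool, wt p η *
      ((RR + 1) * (Real.exp (-(1 / 8)) * Real.exp (r * ∑ i, if η i then b i else 0)) -
      Real.exp (-(1 / 4)) * Real.exp (2 * r * ∑ i, if η i then b i else 0) - RR) ≤
      ∑ η : Fin n → Bool, wt p η *
        (RR ^ 2 * (if 2 * m < ∑ i, (if η i then b i else 0) then 1 else 0)) := by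
    refine Finset.sum_le_sum fun η _ => ?_
    exact mul_le_mul_of_nonneg_left (hpt _) (wt_nonneg hp0 (by linarith) η)
  have hl : ∑ η : Fin n → Bool, wt p η *
      ((RR + 1) * (Real.exp (-(1 / 8)) * Real.exp (r * ∑ i, if η i then b i else 0)) -
      Real.exp (-(1 / 4)) * Real.exp (2 * r * ∑ i, if η i then b i else 0) - RR) =
      (RR + 1) * (Real.exp (-(1 / 8)) *
      ∑ η : Fin n → Bool, wt p η * Real.exp (r * ∑ i, if η i then b i else 0)) -
      Real.exp (-(1 / 4)) *
      (∑ η : Fin n → Bool, wt p η * Real.exp ((2 * r) * ∑ i, if η i then b i else 0)) -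
      RR * ∑ η : Fin n → Bool, wt p η := by
    simp only [Finset.mul_sum (s := (univ : Finset (Fin n → Bool)))]
    rw [← Finset.sum_sub_distrib, ← Finset.sum_sub_distrib]
    exact Finset.sum_congr rfl fun η _ => by ring
  rw [hl, wt_sum] at hsum
  have hr' : ∑ η : Fin n → Bool, wt p η *
        (RR ^ 2 * (if 2 * m < ∑ i, (if η i then b i else 0) then 1 else 0)) =
      RR ^ 2 * ∑ η : Fin n → Bool, wt p η *
      (if 2 * m < ∑ i, (if η i then b i else 0) then 1 else 0) := by
    rw [Finset.mul_sum]
    exact Finset.sum_congr rfl fun η _ => by ring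
  rw [hr'] at hsum
  have hRe : RR = 2 * Real.exp 17 := rfl
  have := mul_le_mul_of_nonneg_left hE1 (show 0 ≤ RR + 1 by linarith)
  linarith

/-- Flip the coordinates marked by `η`. -/
def mfl {n : ℕ} (η x : Fin n → Bool) : Fin n → Bool := fun i => if η i then !x i else x i

lemma mfl_mfl {n : ℕ} (η x : Fin n → Bool) : mfl η (mfl η x) = x := by
  ext i; simp only [mfl]; split_ifs <;> simp

lemma sum_mfl {n : ℕ} (η : Fin n → Bool) (F : (Fin n → Bool) → ℝ) :
    ∑ x, F (mfl η x) = ∑ x, F x :=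
  Fintype.sum_equiv (Function.Involutive.toPerm (mfl η) (mfl_mfl η)) _ _ (fun _ => rfl)

lemma lin_mfl {n : ℕ} (a : Fin n → ℝ) (η x : Fin n → Bool) :
    lin n a (mfl η x) = lin n a x + ∑ i, if η i then -2 * (a i * sgn1 (x i)) else 0 := by
  unfold lin
  rw [← Finset.sum_add_distrib]
  refine Finset.sum_congr rfl fun i _ => ?_
  by_cases h : η i
  · simp [mfl, h, sgn1_not]; ring
  · simp [mfl, h]

lemma spread {n : ℕ} (a : Fin n → ℝ) (ha : ∑ i, (a i) ^ 2 = 1) (m : ℝ) (hm : 0 < m)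
    (hm1 : m ≤ 1 / 500) (hb : ∀ i, |a i| ≤ m) (t : ℝ) (ht : -m ≤ t) (hmt : m * t ≤ 1 / 500) :
    cubePr n (fun x => t - 2 * m < lin n a x) ≤
      (1 + RR ^ 2) * cubePr n (fun x => t < lin n a x) := by
  have hs := pr_split a (t - 2 * m) t (by linarith)
  have key : cubePr n (fun x => lin n a x ∈ Set.Ioc (t - 2 * m) t) ≤
      RR ^ 2 * cubePr n (fun x => t < lin n a x) := by
    set p := 256 * m ^ 2 with hp
    have hp0 : 0 ≤ p := by positivity
    have hp1 : p ≤ 1 := by rw [hp]; nlinarith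
    have e1 : cubePr n (fun x => t < lin n a x) =
        cubeE n (fun x => ∑ η, wt p η * (if t < lin n a (mfl η x) then 1 else 0)) := by
      rw [cubeE_sum]
      have : ∀ η : Fin n → Bool,
          cubeE n (fun x => wt p η * (if t < lin n a (mfl η x) then 1 else 0)) =
          wt p η * cubePr n (fun x => t < lin n a x) := by
        intro η
        rw [cubeE_smul, cubePr_eq]
        congr 1
        simp only [cubeE]
        rw [sum_mfl η (fun x => if t < lin n a x then (1 : ℝ) else 0)]
      simp_rw [this]
      rw [← Finset.sum_mul, wt_sum, one_mul]
    rw [e1, cubePr_eq, ← cubeE_smul]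
    refine cubeE_mono fun x => ?_
    have hnn : ∀ η : Fin n → Bool,
        0 ≤ wt p η * (if t < lin n a (mfl η x) then (1 : ℝ) else 0) := fun η =>
      mul_nonneg (wt_nonneg hp0 hp1 η) (by split_ifs <;> norm_num)
    split_ifs with hx
    · simp only [Set.mem_Ioc] at hx
      have h := anticonc (fun i => -2 * (a i * sgn1 (x i))) m (lin n a x) hm hm1 ?_ ?_ ?_ ?_ ?_
      · refine h.trans ?_
        refine mul_le_mul_of_nonneg_left ?_ (sq_nonneg _)
        refine Finset.sum_le_sum fun η _ => ?_
        refine mul_le_mul_of_nonneg_left ?_ (wt_nonneg hp0 hp1 η)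
        rw [lin_mfl]
        split_ifs with h1 h2
        · exact le_rfl
        · exfalso; apply h2; linarith
        · norm_num
        · exact le_rfl
      · intro i
        rw [abs_mul, abs_mul, abs_sgn1]
        have := hb i
        norm_num
        linarith
      · have : ∀ i, (-2 * (a i * sgn1 (x i))) ^ 2 = 4 * a i ^ 2 := by
          intro i
          calc _ = 4 * a i ^ 2 * sgn1 (x i) ^ 2 := by ring
            _ = _ := by rw [sgn1_sq, mul_one]
        simp_rw [this]
        rw [← Finset.mul_sum, ha, mul_one]
      · rw [← Finset.mul_sum, lin]
      · nlinarith [hx.2]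
      · linarith [hx.1]
    · exact mul_nonneg (sq_nonneg _) (Finset.sum_nonneg fun η _ => hnn η)
  linarith

lemma half_le {n : ℕ} (a : Fin n → ℝ) (m : ℝ) (hm : 0 < m) :
    1 / 2 ≤ cubePr n (fun x => -m < lin n a x) := by
  have h1 : (1 : ℝ) ≤ cubePr n (fun x => -m < lin n a x) + cubePr n (fun x => -m < lin n a x) := by
    have e : cubePr n (fun x => -m < lin n a x) =
        cubeE n (fun x => if -m < lin n a (mfl (fun _ => true) x) then 1 else 0) := by
      rw [cubePr_eq]
      simp only [cubeE]
      rw [sum_mfl (fun _ => true) (fun x => if -m < lin n a x then (1 : ℝ) else 0)]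
    nth_rw 2 [e]
    rw [cubePr_eq, ← cubeE_add]
    have h1 : (1 : ℝ) = cubeE n (fun _ => 1) := by simp [cubeE]
    nth_rw 1 [h1]
    refine cubeE_mono fun x => ?_
    have hl : lin n a (mfl (fun _ => true) x) = - lin n a x := by
      rw [lin_mfl]
      simp only [if_true]
      rw [← Finset.mul_sum, lin]; ring
    rw [hl]
    by_cases h : -m < lin n a x
    · simp only [h, if_true]; split_ifs <;> norm_num
    · have : -m < - lin n a x := by linarith
      simp only [this, h, if_true, if_false]; norm_num
  linarith

lemma log_facts {ε : ℝ} (hε : 0 < ε) (hε2 : ε ≤ 1 / 2) :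
    0.69 ≤ Real.log (1 / ε) := by
  have h1 := Real.log_two_gt_d9
  have h2 : Real.log 2 ≤ Real.log (1 / ε) := by
    apply Real.log_le_log (by norm_num)
    rw [le_div_iff₀ hε]; linarith
  linarith

lemma upper_main {n : ℕ} (a : Fin n → ℝ) (m t ε : ℝ) (hm : 0 < m) (ha : ∑ i, (a i) ^ 2 = 1)
    (hb : ∀ i, |a i| ≤ m) (ht : -m ≤ t)
    (hεdef : ε = min (1 / 2) (cubePr n (fun x => t < lin n a x))) (hε : 0 < ε) :
    cubePr n (fun x => lin n a x ∈ Set.Ioc t (t + 2 * m)) ≤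
      (2000 + 48 * (1 + RR ^ 2)) * (ε * min 1 (m * Real.sqrt (Real.log (1 / ε)))) := by
  set Q := cubePr n (fun x => lin n a x ∈ Set.Ioc t (t + 2 * m)) with hQ
  set T := cubePr n (fun x => t < lin n a x) with hT
  have hε2 : ε ≤ 1 / 2 := hεdef ▸ min_le_left _ _
  have hεT : ε ≤ T := hεdef ▸ min_le_right _ _
  have hT1 : T ≤ 1 := cubePr_le_one _ _
  have hTε : T ≤ 2 * ε := by
    rcases min_choice (1 / 2) T with h | h <;> rw [h] at hεdef <;> linarith
  have hL := log_facts hε hε2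
  have hQT : Q ≤ T := cubePr_mono fun x hx => hx.1
  set L := Real.log (1 / ε) with hLdef
  set q := Real.sqrt L with hq
  have hq2 : q ^ 2 = L := Real.sq_sqrt (by linarith)
  have hq0 : 0 < q := Real.sqrt_pos.2 (by linarith)
  have hq8 : 0.8 ≤ q := by
    by_contra hc
    push Not at hc
    nlinarith
  have hR0 := sq_nonneg RR
  rcases le_or_gt (m * q) (1 / 1000) with hc | hc
  · have hmin : min 1 (m * q) = m * q := min_eq_right (by linarith)
    rw [hmin]
    have hm1 : m ≤ 1 / 500 := by nlinarith
    have hmt : m * t ≤ 1 / 500 := by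
      rcases le_total t 0 with h0 | h0
      · nlinarith
      have hch := chernoff a ha t h0
      have h1 : ε ≤ Real.exp (-(t ^ 2 / 2)) := hεT.trans hch
      have h2 := (Real.le_log_iff_exp_le (show 0 < 1 / ε by positivity) (x := t ^ 2 / 2)).2 (by
        rw [le_div_iff₀ hε]
        calc _ ≤ Real.exp (t ^ 2 / 2) * Real.exp (-(t ^ 2 / 2)) := by gcongr
          _ = 1 := by rw [← Real.exp_add]; simp)
      have h3 : t ≤ 2 * q := by
        apply le_of_sq_le_sq _ (by positivity)
        rw [mul_pow, hq2]
        linarith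
      calc m * t ≤ m * (2 * q) := by gcongr
        _ ≤ 1 / 500 := by linarith
    have hsp := spread a ha m hm hm1 hb t ht hmt
    have hu1 := upper1 a ha m hb t
    have hmono : T ≤ cubePr n (fun x => t - 2 * m < lin n a x) :=
      cubePr_mono fun x hx => by linarith
    have hu2 := upper2 a ha (t - 2 * m) (6 * m) ε (by positivity) hε hε2 (hεT.trans hmono)
    have h1 : Q ≤ 6 * m * (4 * ((1 + RR ^ 2) * (2 * ε)) * q) := by
      refine hu1.trans (hu2.trans ?_)
      gcongr
      exact hsp.trans (by gcongr)
    have h2 : 0 ≤ ε * (m * q) := by positivity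
    nlinarith
  · have hmin : 1 / 1000 ≤ min 1 (m * q) := le_min (by norm_num) hc.le
    have h1 : ε * (1 / 1000) ≤ ε * min 1 (m * q) := by gcongr
    have h2 : 0 ≤ ε * min 1 (m * q) := by linarith [show 0 ≤ ε * (1 / 1000) by positivity]
    nlinarith

lemma lower_aux {n : ℕ} (a : Fin n → ℝ) (m' m t ε : ℝ) (hm' : 0 < m') (hm'1 : m' ≤ 1)
    (ha : ∑ i, (a i) ^ 2 = 1)
    (hb : ∀ i, |a i| ≤ m') (i : Fin n) (hi : |a i| = m') (hmm : m' ≤ m) (ht : -m' ≤ t)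
    (hεdef : ε = min (1 / 2) (cubePr n (fun x => t < lin n a x))) (hε : 0 < ε) :
    ε * min 1 (m * Real.sqrt (Real.log (1 / ε))) ≤
      20 * cubePr n (fun x => lin n a x ∈ Set.Ioc t (t + 2 * m)) := by
  have hm : 0 < m := by linarith
  have hε2 : ε ≤ 1 / 2 := hεdef ▸ min_le_left _ _
  have hεT : ε ≤ cubePr n (fun x => t < lin n a x) := hεdef ▸ min_le_right _ _
  have hL := log_facts hε hε2
  set L := Real.log (1 / ε) with hLdef
  set q := Real.sqrt L with hq
  have hq2 : q ^ 2 = L := Real.sq_sqrt (by linarith)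
  have hq0 : 0 < q := Real.sqrt_pos.2 (by linarith)
  have hdec : cubePr n (fun x => t + 4 / q < lin n a x) ≤
      cubePr n (fun x => t < lin n a x) / 2 := by
    rcases le_total (cubePr n (fun x => t < lin n a x)) (1 / 2) with h | h
    · rw [min_eq_right h] at hεdef
      have := decay a ha t (4 / q) (by positivity) (by rw [← hεdef]; exact hε)
      rw [← hεdef, ← hLdef] at this
      rw [← hεdef]
      have e : 8 / (4 / q) ^ 2 = L / 2 := by rw [← hq2]; field_simp; norm_num
      rw [e] at this
      have h3 : L * cubePr n (fun x => t + 4 / q < lin n a x) ≤ L * (ε / 2) := by linarith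
      exact le_of_mul_le_mul_left h3 (by linarith)
    · rw [min_eq_left h] at hεdef
      have hq1 : q ≤ 1 := by
        have hL1 : L ≤ 1 := by
          rw [hLdef, hεdef]
          have := Real.log_two_lt_d9
          norm_num
          linarith
        rw [hq]
        exact Real.sqrt_le_iff.2 ⟨by norm_num, by linarith⟩
      have h4 : 4 ≤ 4 / q := by rw [le_div_iff₀ hq0]; linarith
      have h5 : cubePr n (fun x => t + 4 / q < lin n a x) ≤
          cubePr n (fun x => 2 < lin n a x) := cubePr_mono fun x hx => by linarith
      have h6 := chernoff a ha 2 (by norm_num)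
      have h7 : Real.exp (-(2 ^ 2 / 2)) ≤ 1 / 4 := by
        rw [Real.exp_neg, one_div]
        apply inv_anti₀ (by norm_num)
        have h8 := Real.add_one_le_exp (1 : ℝ)
        have h9 : Real.exp (2 ^ 2 / 2) = Real.exp 1 ^ 2 := by
          rw [← Real.exp_nat_mul]; norm_num
        rw [h9]
        nlinarith
      linarith
  have hcore := lower_core a m' m hm' hb i hi hmm t (4 / q) ht (by positivity) hdec
  set Q := cubePr n (fun x => lin n a x ∈ Set.Ioc t (t + 2 * m)) with hQ
  have hQ0 : 0 ≤ Q := cubePr_nonneg _ _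
  have hmin0 : 0 ≤ min 1 (m * q) := le_min zero_le_one (by positivity)
  have h1 : min 1 (m * q) * (4 / q / m + 1) ≤ 5 := by
    have e1 : min 1 (m * q) * (4 / q / m) ≤ 4 := by
      calc _ ≤ (m * q) * (4 / q / m) := by gcongr; exact min_le_right _ _
        _ = 4 := by field_simp
    have e2 : min 1 (m * q) ≤ 1 := min_le_left _ _
    linarith
  calc ε * min 1 (m * q) ≤ (4 * (4 / q / m + 1) * Q) * min 1 (m * q) := by
        gcongr; linarith
    _ = 4 * (min 1 (m * q) * (4 / q / m + 1)) * Q := by ring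
    _ ≤ 4 * 5 * Q := by gcongr
    _ = 20 * Q := by ring

lemma lower_main {n : ℕ} (a : Fin n → ℝ) (m t ε : ℝ) (ha : ∑ i, (a i) ^ 2 = 1)
    (hb : ∀ i, |a i| ≤ m) (ht : -m ≤ t)
    (hεdef : ε = min (1 / 2) (cubePr n (fun x => t < lin n a x))) (hε : 0 < ε) :
    0 < m ∧ ε * min 1 (m * Real.sqrt (Real.log (1 / ε))) ≤
      40 * cubePr n (fun x => lin n a x ∈ Set.Ioc t (t + 2 * m)) := by
  have hne : Nonempty (Fin n) := by
    by_contra hc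
    rw [not_nonempty_iff] at hc
    simp at ha
  obtain ⟨i, hi⟩ := Finite.exists_max (fun i => |a i|)
  obtain ⟨m', hm'⟩ : ∃ m', |a i| = m' := ⟨_, rfl⟩
  simp only [hm'] at hi
  have hmm : m' ≤ m := hm' ▸ hb i
  have hpos : 0 < m' := by
    rcases (abs_nonneg (a i)).eq_or_lt with h | h
    · exfalso
      have : ∀ j, a j = 0 := by
        intro j
        have := hi j
        rw [← hm', ← h] at this
        exact abs_nonpos_iff.1 this
      simp [this] at ha
    · rwa [← hm']
  have hle1 : m' ≤ 1 := by
    have h1 : a i ^ 2 ≤ 1 := by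
      rw [← ha]
      exact Finset.single_le_sum (f := fun j => a j ^ 2) (fun j _ => sq_nonneg _) (mem_univ i)
    rw [← hm']
    exact (sq_le_one_iff_abs_le_one _).1 h1
  have hm : 0 < m := by linarith
  refine ⟨hm, ?_⟩
  rcases le_or_gt (-m') t with h | h
  · have := lower_aux a m' m t ε hpos hle1 ha hi i hm' hmm h hεdef hε
    have h0 := cubePr_nonneg n (fun x => lin n a x ∈ Set.Ioc t (t + 2 * m))
    linarith
  · have hh := half_le a m' hpos
    have hT : cubePr n (fun x => -m' < lin n a x) ≤ cubePr n (fun x => t < lin n a x) :=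
      cubePr_mono fun x hx => by linarith
    have hε1 : ε = 1 / 2 := by rw [hεdef]; exact min_eq_left (hh.trans hT)
    have h1 := lower_aux a m' ((m + m') / 2) (-m') ε hpos hle1 ha hi i hm' (by linarith) le_rfl
      (by rw [hε1]; exact (min_eq_left hh).symm) hε
    have h2 : cubePr n (fun x => lin n a x ∈ Set.Ioc (-m') (-m' + 2 * ((m + m') / 2))) ≤
        cubePr n (fun x => lin n a x ∈ Set.Ioc t (t + 2 * m)) := by
      refine cubePr_mono fun x hx => ?_
      simp only [Set.mem_Ioc] at hx ⊢
      exact ⟨by linarith [hx.1], by linarith [hx.2]⟩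
    set q := Real.sqrt (Real.log (1 / ε)) with hq
    have hq0 : 0 ≤ q := Real.sqrt_nonneg _
    have h3 : min 1 (m * q) ≤ 2 * min 1 ((m + m') / 2 * q) := by
      rcases min_choice 1 ((m + m') / 2 * q) with h | h <;> rw [h]
      · exact (min_le_left _ _).trans (by norm_num)
      · refine (min_le_right _ _).trans ?_
        nlinarith
    have h4 := mul_le_mul_of_nonneg_left h3 hε.le
    linarith

end LFS

/-- **Probability of a linear form landing in an interval.** For `l(x) = ∑ aᵢxᵢ`
with `∑ aᵢ² = 1`, `m ≥ maxᵢ |aᵢ|`, `t ≥ -m`, and `ε = min(1/2, Pr[l(x) > t]) > 0`: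
`Pr[l(x) ∈ (t, t+2m]] = Θ(ε·min(1, m√(log(1/ε))))`. -/
theorem linear_form_in_segment :
    ∃ c₁ c₂ : ℝ, 0 < c₁ ∧ 0 < c₂ ∧
      ∀ (n : ℕ) (a : Fin n → ℝ) (m t ε : ℝ),
        (∑ i, (a i) ^ 2) = 1 → (∀ i, |a i| ≤ m) → -m ≤ t →
        ε = min (1 / 2) (cubePr n (fun x => t < lin n a x)) → 0 < ε →
        c₁ * (ε * min 1 (m * Real.sqrt (Real.log (1 / ε)))) ≤
            cubePr n (fun x => lin n a x ∈ Set.Ioc t (t + 2 * m)) ∧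
          cubePr n (fun x => lin n a x ∈ Set.Ioc t (t + 2 * m)) ≤
            c₂ * (ε * min 1 (m * Real.sqrt (Real.log (1 / ε)))) := by
  refine ⟨1 / 40, 2000 + 48 * (1 + LFS.RR ^ 2), by norm_num, by positivity, ?_⟩
  intro n a m t ε ha hb ht hεdef hε
  obtain ⟨hm, hl⟩ := LFS.lower_main a m t ε ha hb ht hεdef hε
  refine ⟨by linarith, ?_⟩
  exact LFS.upper_main a m t ε hm ha hb ht hεdef hε

end
end
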